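/- arXiv:2409.00380 — 2 statements merged into one kernel-verified Lean document; each statement's English description precedes it below -/
import Mathlib

section
/- Let ζ = e^{πi/12}, let G_31 ⊂ GL_4(C) be the finite complex reflection group generated by the 60 order-2 reflections s(v) whose roots v are: e_a − i^k e_b (1 ≤ a < b ≤ 4, 0 ≤ k < 4), e_a (1 ≤ a ≤ 4), and the vectors (i^{a_1}, i^{a_2}, i^{a_3}, i^{a_4})^T with a_1 + a_2 + a_3 + a_4 even. Let g = s(e_4) s(e_1 − e_2) s(e_1 + e_4) s(e_1 + i e_2 + e_3 − i e_4) s(e_1 + e_2 + e_3 + e_4). Let E be the ζ^3-eigenspace of g^3, a 2-dimensional subspace, N_E = {s ∈ G_31 : s(E) ⊆ E}, and π_E restriction to E. Then there exists a C-linear isomorphism ψ : E → C^2 such that ψ ∘ π_E(N_E) ∘ ψ^{−1} = G_9, where G_9 ⊂ GL_2(C) is generated by r_3 = (1/√2)·[[1, −1], [−1, −1]] and r_4 = [[1, 0], [0, i]]. In other words, the 8-reflection subquotient of G_31 is isomorphic to G_9. -/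
open Matrix MvPolynomial

namespace Paper

noncomputable section

/-- The standard Hermitian inner product `(v, w) = Σ v_i conj(w_i)` on `ℂ^N`. -/
def herm {N : ℕ} (v w : Fin N → ℂ) : ℂ := ∑ i, v i * (starRingEnd ℂ) (w i)

/-- The reflection `s(v, λ) : w ↦ w - (1 - λ) ((w,v)/(v,v)) v` with root `v` and
nontrivial eigenvalue `λ`, as a matrix. -/
def reflMat {N : ℕ} (v : Fin N → ℂ) (lam : ℂ) : Matrix (Fin N) (Fin N) ℂ :=
  Matrix.of fun i j =>
    (if i = j then (1 : ℂ) else 0) - (1 - lam) * v i * (starRingEnd ℂ) (v j) / herm v v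

/-- The monomial matrix `ι(θ, σ)` with `e_i ↦ θ_{σ(i)} e_{σ(i)}`. -/
def monomialMatrix {N : ℕ} (θ : Fin N → ℂ) (σ : Equiv.Perm (Fin N)) :
    Matrix (Fin N) (Fin N) ℂ :=
  Matrix.of fun j i => if j = σ i then θ (σ i) else 0

/-- The imprimitive reflection group `G(m, p, N)`: all monomial `N × N` matrices whose
nonzero entries are `m`-th roots of unity and whose product of nonzero entries is an
`(m/p)`-th root of unity. -/
def Gimp (m p N : ℕ) : Set (Matrix (Fin N) (Fin N) ℂ) :=
  {M | ∃ (θ : Fin N → ℂ) (σ : Equiv.Perm (Fin N)),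
    (∀ i, θ i ^ m = 1) ∧ (∏ i, θ i) ^ (m / p) = 1 ∧ M = monomialMatrix θ σ}

/-- The `μ`-eigenspace of (the linear map of) a matrix. -/
def eigSpace {n : ℕ} (M : Matrix (Fin n) (Fin n) ℂ) (μ : ℂ) : Submodule ℂ (Fin n → ℂ) :=
  Module.End.eigenspace M.mulVecLin μ

/-- The 60 roots of `G₃₁`: `e_a - i^k e_b` (`a < b`, `0 ≤ k < 4`), `e_a`, and the
vectors `(i^{t_1}, i^{t_2}, i^{t_3}, i^{t_4})` with `t_1 + t_2 + t_3 + t_4` even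
(the `G(4,2,4)`-orbit of `e_1 + e_2 + e_3 + e_4`). -/
def rootsG31 : Set (Fin 4 → ℂ) :=
  {v | ∃ (p q : Fin 4) (k : ℕ), p < q ∧ k < 4 ∧
    v = (Pi.single p 1 : Fin 4 → ℂ) - Complex.I ^ k • (Pi.single q 1 : Fin 4 → ℂ)} ∪
  {v | ∃ p : Fin 4, v = (Pi.single p 1 : Fin 4 → ℂ)} ∪
  {v | ∃ t : Fin 4 → ℕ, Even (t 0 + t 1 + t 2 + t 3) ∧ v = fun i => Complex.I ^ t i}

/-!
Identify the eigenspace `E` with `ℂ²` through the basis `(1, 0, k, 0)`, `(0, 1, 0, k)`, where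
`k = -(1 + √2)`; this is a similarity. The group `G₃₁` is unitary and preserves a
`ℤ[ζ₈]`-lattice of `E₈` type, so the subquotient is contained in the group of unitary automorphisms
of the lattice which that one cuts out on `E`. Writing a vector of the latter as `a + ζ₈ b` with
`a, b ∈ ℤ[i]²` shows that, up to powers of `ζ₈`, its vectors of norm `2` are `(√2, 0)`, `(0, √2)`
and `(1, iᵐ)`. They form one orbit of `G₉`, and the unitary automorphisms fixing `(√2, 0)` are the
powers of `r₄`; hence every unitary automorphism lies in `G₉`. Conversely, `r₃` and `r₄` are induced
by products of two and three reflections of `G₃₁`.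
-/

section SubquotientOfG31

open Complex

section Reflections

variable {N : ℕ}

theorem herm_eq_dotProduct (v w : Fin N → ℂ) : herm v w = v ⬝ᵥ star w := rfl

theorem herm_vec2 (a b c d : ℂ) : herm ![a, b] ![c, d] = a * star c + b * star d := by
  rw [herm, Fin.sum_univ_two]
  rfl

theorem star_herm (v w : Fin N → ℂ) : star (herm v w) = herm w v := by
  rw [herm_eq_dotProduct, herm_eq_dotProduct, dotProduct_star, star_star]

theorem herm_smul_smul (c : ℂ) (v w : Fin N → ℂ) :
    herm (c • v) (c • w) = c * star c * herm v w := by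
  rw [herm_eq_dotProduct, herm_eq_dotProduct, star_smul, smul_dotProduct, dotProduct_smul,
    smul_smul, smul_eq_mul]

theorem herm_mulVec_of_mem_unitaryGroup {U : Matrix (Fin N) (Fin N) ℂ}
    (hU : U ∈ unitaryGroup (Fin N) ℂ) (v w : Fin N → ℂ) :
    herm (U *ᵥ v) (U *ᵥ w) = herm v w := by
  rw [herm_eq_dotProduct, star_mulVec, dotProduct_comm, ← dotProduct_mulVec, mulVec_mulVec,
    ← star_eq_conjTranspose, mem_unitaryGroup_iff'.1 hU, one_mulVec, dotProduct_comm,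
    herm_eq_dotProduct]

theorem reflMat_eq_one_sub (v : Fin N → ℂ) (lam : ℂ) :
    reflMat v lam = 1 - ((1 - lam) / herm v v) • vecMulVec v (star v) := by
  ext i j
  simp only [reflMat, of_apply, Matrix.sub_apply, Matrix.smul_apply, vecMulVec_apply, one_apply,
    smul_eq_mul, Pi.star_apply, starRingEnd_apply]
  ring

theorem reflMat_mulVec (v w : Fin N → ℂ) (lam : ℂ) :
    reflMat v lam *ᵥ w = w - ((1 - lam) / herm v v * herm w v) • v := by
  rw [reflMat_eq_one_sub, sub_mulVec, one_mulVec, smul_mulVec, vecMulVec_mulVec,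
    op_smul_eq_smul, smul_smul, dotProduct_comm, herm_eq_dotProduct w]

theorem reflMat_smul {c : ℂ} (hc : c ≠ 0) (v : Fin N → ℂ) (lam : ℂ) :
    reflMat (c • v) lam = reflMat v lam := by
  have hc' : star c ≠ 0 := star_ne_zero.2 hc
  rw [reflMat_eq_one_sub, reflMat_eq_one_sub, herm_smul_smul, star_smul, smul_vecMulVec,
    vecMulVec_smul, smul_smul, smul_smul]
  congr 2
  field_simp

theorem reflMat_one (v : Fin N → ℂ) : reflMat v 1 = 1 := by
  rw [reflMat_eq_one_sub, sub_self, zero_div, zero_smul, sub_zero]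

open scoped ComplexOrder in
theorem herm_self_ne_zero {v : Fin N → ℂ} (hv : v ≠ 0) : herm v v ≠ 0 :=
  dotProduct_self_star_eq_zero.not.2 hv

theorem reflMat_mul_reflMat (v : Fin N → ℂ) (a b : ℂ) :
    reflMat v a * reflMat v b = reflMat v (a * b) := by
  rcases eq_or_ne v 0 with rfl | hv
  · simp [reflMat_eq_one_sub]
  have hv' : herm v v ≠ 0 := herm_self_ne_zero hv
  have hsq : vecMulVec v (star v) * vecMulVec v (star v) = herm v v • vecMulVec v (star v) := by
    rw [vecMulVec_mul_vecMulVec, dotProduct_comm, herm_eq_dotProduct, vecMulVec_smul]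
  simp only [reflMat_eq_one_sub, sub_mul, mul_sub, one_mul, mul_one, Matrix.smul_mul,
    Matrix.mul_smul, hsq, smul_smul]
  rw [div_mul_cancel₀ _ hv']
  module

theorem conjTranspose_reflMat (v : Fin N → ℂ) (lam : ℂ) :
    (reflMat v lam)ᴴ = reflMat v (star lam) := by
  rw [reflMat_eq_one_sub, reflMat_eq_one_sub, conjTranspose_sub, conjTranspose_one,
    conjTranspose_smul, conjTranspose_vecMulVec, star_star, star_div₀, star_herm, star_sub,
    star_one]

theorem reflMat_mem_unitaryGroup (v : Fin N → ℂ) {lam : ℂ} (h : lam * star lam = 1) :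
    reflMat v lam ∈ unitaryGroup (Fin N) ℂ := by
  rw [mem_unitaryGroup_iff, star_eq_conjTranspose, conjTranspose_reflMat, reflMat_mul_reflMat, h,
    reflMat_one]

end Reflections

section Submonoids

variable {m n R : Type*} [Fintype m] [Fintype n] [DecidableEq m] [DecidableEq n]

/-- The matrices mapping a set of column vectors, typically a lattice, into itself. -/
def setStabilizer [Semiring R] (S : Set (n → R)) : Submonoid (Matrix n n R) where
  carrier := {M | ∀ v ∈ S, M *ᵥ v ∈ S}
  one_mem' v hv := by rwa [one_mulVec]
  mul_mem' {A B} hA hB v hv := by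
    rw [← mulVec_mulVec]
    exact hA _ (hB v hv)

/-- The matrices induced, in the basis formed by the columns of `F`, by those elements of `G` that
stabilize the column space of `F`: the image `π_E(N_E)` for `E` the column space of `F`. -/
def subquotient [Semiring R] (G : Submonoid (Matrix m m R)) (F : Matrix m n R) :
    Submonoid (Matrix n n R) where
  carrier := {A | ∃ M ∈ G, M * F = F * A}
  one_mem' := ⟨1, G.one_mem, by rw [Matrix.one_mul, Matrix.mul_one]⟩
  mul_mem' := by
    rintro A B ⟨M, hM, hA⟩ ⟨M', hM', hB⟩
    exact ⟨M * M', G.mul_mem hM hM', by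
      rw [Matrix.mul_assoc, hB, ← Matrix.mul_assoc, hA, Matrix.mul_assoc]⟩

theorem mem_subquotient_iff [CommSemiring R] {G : Submonoid (Matrix m m R)} {F : Matrix m n R}
    {A : Matrix n n R} :
    A ∈ subquotient G F ↔ ∃ M ∈ G,
      (∀ v ∈ LinearMap.range F.mulVecLin, M *ᵥ v ∈ LinearMap.range F.mulVecLin) ∧
        ∀ t, M *ᵥ F.mulVecLin t = F.mulVecLin (A *ᵥ t) := by
  refine exists_congr fun M => and_congr_right fun _ => ⟨fun h => ?_, fun h => ?_⟩
  · have hM (t : n → R) : M *ᵥ F.mulVecLin t = F.mulVecLin (A *ᵥ t) := by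
      rw [mulVecLin_apply, mulVecLin_apply, mulVec_mulVec, mulVec_mulVec, h]
    refine ⟨?_, hM⟩
    rintro _ ⟨t, rfl⟩
    exact ⟨A *ᵥ t, (hM t).symm⟩
  · refine ext_of_mulVec_single fun j => ?_
    rw [← mulVec_mulVec, ← mulVec_mulVec]
    exact h.2 _

theorem subquotient_le_setStabilizer [Semiring R] {G : Submonoid (Matrix m m R)}
    {S : Set (m → R)} (hG : G ≤ setStabilizer S) (F : Matrix m n R) :
    subquotient G F ≤ setStabilizer {t | F *ᵥ t ∈ S} := by
  rintro A ⟨M, hM, hA⟩ t ht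
  rw [Set.mem_ofPred_eq, mulVec_mulVec, ← hA, ← mulVec_mulVec]
  exact hG hM _ ht

theorem subquotient_le_unitaryGroup [Field R] [StarRing R] {G : Submonoid (Matrix m m R)}
    (hG : G ≤ unitaryGroup m R) {F : Matrix m n R} {c : R} (hc : c ≠ 0)
    (hF : Fᴴ * F = c • (1 : Matrix n n R)) : subquotient G F ≤ unitaryGroup n R := by
  rintro A ⟨M, hM, hA⟩
  have hM' : Mᴴ * M = 1 := mem_unitaryGroup_iff'.1 (hG hM)
  have h : c • (Aᴴ * A) = c • (1 : Matrix n n R) :=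
    calc c • (Aᴴ * A) = Aᴴ * (Fᴴ * F) * A := by
          rw [hF, Matrix.mul_smul, Matrix.mul_one, Matrix.smul_mul]
      _ = (F * A)ᴴ * (F * A) := by
          rw [conjTranspose_mul]
          simp only [Matrix.mul_assoc]
      _ = Fᴴ * (Mᴴ * M) * F := by
          rw [← hA, conjTranspose_mul]
          simp only [Matrix.mul_assoc]
      _ = c • 1 := by rw [hM', Matrix.mul_one, hF]
  exact mem_unitaryGroup_iff'.2 (smul_right_injective _ hc h)

end Submonoids

section Zeta8Ring

/-- The number `√2`, as a complex number. -/
def sqrtTwo : ℂ := (Real.sqrt 2 : ℂ)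

theorem sqrtTwo_sq : sqrtTwo ^ 2 = 2 := by
  rw [sqrtTwo, ← ofReal_pow, Real.sq_sqrt zero_le_two, ofReal_ofNat]

theorem sqrtTwo_ne_zero : sqrtTwo ≠ 0 := by
  simp [sqrtTwo]

theorem star_sqrtTwo : star sqrtTwo = sqrtTwo :=
  conj_ofReal _

/-- The primitive eighth root of unity `ζ₈ = e^{πi/4}`. -/
def zeta8 : ℂ := exp (Real.pi / 4 * I)

theorem sqrtTwo_mul_zeta8 : sqrtTwo * zeta8 = 1 + I := by
  have h : zeta8 = sqrtTwo / 2 * (1 + I) := by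
    rw [zeta8, exp_mul_I, sqrtTwo, ← ofReal_ofNat, ← ofReal_div, ← ofReal_cos, ← ofReal_sin,
      Real.cos_pi_div_four, Real.sin_pi_div_four]
    push_cast
    ring
  rw [h]
  linear_combination (1 + I) / 2 * sqrtTwo_sq

theorem zeta8_mul_one_sub_I : zeta8 * (1 - I) = sqrtTwo := by
  refine mul_left_cancel₀ sqrtTwo_ne_zero ?_
  linear_combination (1 - I) * sqrtTwo_mul_zeta8 - sqrtTwo_sq - I_sq

theorem zeta8_sq : zeta8 ^ 2 = I := by
  have h : 2 * zeta8 ^ 2 = 2 * I := by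
    linear_combination -zeta8 ^ 2 * sqrtTwo_sq + (sqrtTwo * zeta8 + 1 + I) * sqrtTwo_mul_zeta8 +
      I_sq
  exact mul_left_cancel₀ two_ne_zero h

theorem star_I : star I = -I := conj_I

theorem I_pow_mul_star (k : ℕ) : I ^ k * star (I ^ k) = 1 := by
  rw [star_pow, ← mul_pow, star_I, mul_neg, I_mul_I, neg_neg, one_pow]

theorem zeta8_pow_four : zeta8 ^ 4 = -1 := by
  rw [show zeta8 ^ 4 = (zeta8 ^ 2) ^ 2 by ring, zeta8_sq, I_sq]

theorem star_zeta8 : star zeta8 = -I * zeta8 := by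
  have h := congrArg star sqrtTwo_mul_zeta8
  simp only [star_mul', star_sqrtTwo, star_add, star_one, star_I] at h
  refine mul_left_cancel₀ sqrtTwo_ne_zero ?_
  linear_combination h + I * sqrtTwo_mul_zeta8 + I_sq

/-- The ring of integers `ℤ[ζ₈] = ℤ[i] ⊕ ζ₈ ℤ[i]` of the eighth cyclotomic field. -/
def zeta8Ring : Subring ℂ where
  carrier := {x | ∃ a b : GaussianInt, x = a + zeta8 * b}
  one_mem' := ⟨1, 0, by simp⟩
  zero_mem' := ⟨0, 0, by simp⟩
  neg_mem' := by
    rintro _ ⟨a, b, rfl⟩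
    exact ⟨-a, -b, by rw [map_neg, map_neg]; ring⟩
  add_mem' := by
    rintro _ _ ⟨a, b, rfl⟩ ⟨c, d, rfl⟩
    exact ⟨a + c, b + d, by rw [map_add, map_add]; ring⟩
  mul_mem' := by
    rintro _ _ ⟨a, b, rfl⟩ ⟨c, d, rfl⟩
    refine ⟨a * c + ⟨0, 1⟩ * (b * d), a * d + b * c, ?_⟩
    simp only [map_add, map_mul, GaussianInt.toComplex_def']
    push_cast
    linear_combination (b * d : ℂ) * zeta8_sq

theorem zeta8_mem : zeta8 ∈ zeta8Ring := ⟨0, 1, by simp⟩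

theorem I_mem : I ∈ zeta8Ring := by
  rw [← zeta8_sq]
  exact pow_mem zeta8_mem 2

theorem sqrtTwo_mem : sqrtTwo ∈ zeta8Ring := by
  rw [← zeta8_mul_one_sub_I]
  exact mul_mem zeta8_mem (sub_mem (one_mem _) I_mem)

theorem star_mem_zeta8Ring {x : ℂ} (hx : x ∈ zeta8Ring) : star x ∈ zeta8Ring := by
  obtain ⟨a, b, rfl⟩ := hx
  have h (c : GaussianInt) : (c : ℂ) ∈ zeta8Ring := ⟨c, 0, by simp⟩
  rw [star_add, star_mul', star_zeta8, Complex.star_def, ← GaussianInt.toComplex_star,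
    ← GaussianInt.toComplex_star]
  exact add_mem (h _) (mul_mem (mul_mem (neg_mem I_mem) zeta8_mem) (h _))

/-- The unit group of `ℤ[i] / 2 ℤ[i]` is `{1, i}`, and there `i ^ t = 1 + t * (i - 1)`. -/
theorem I_pow_sub_div_two_mem (t : ℕ) : (I ^ t - 1 - t * (I - 1)) / 2 ∈ zeta8Ring := by
  induction t with
  | zero => simp
  | succ t ih =>
    have h : (I ^ (t + 1) - 1 - (t + 1 : ℕ) * (I - 1)) / 2 =
        I * ((I ^ t - 1 - t * (I - 1)) / 2) - t * I := by
      push_cast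
      linear_combination (t / 2 : ℂ) * I_sq
    rw [h]
    exact sub_mem (mul_mem I_mem ih) (mul_mem (natCast_mem _ t) I_mem)

theorem I_sub_one_div_sqrtTwo_mem : (I - 1) / sqrtTwo ∈ zeta8Ring := by
  have h : (I - 1) / sqrtTwo = I * zeta8 := by
    rw [div_eq_iff sqrtTwo_ne_zero]
    linear_combination -I * sqrtTwo_mul_zeta8 - I_sq
  rw [h]
  exact mul_mem I_mem zeta8_mem

theorem I_pow_sub_one_div_sqrtTwo_mem (t : ℕ) : (I ^ t - 1) / sqrtTwo ∈ zeta8Ring := by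
  have h : (I ^ t - 1) / sqrtTwo =
      sqrtTwo * ((I ^ t - 1 - t * (I - 1)) / 2) + t * ((I - 1) / sqrtTwo) := by
    field_simp [sqrtTwo_ne_zero]
    linear_combination -(I ^ t - 1 - t * (I - 1)) * sqrtTwo_sq
  rw [h]
  exact add_mem (mul_mem sqrtTwo_mem (I_pow_sub_div_two_mem t))
    (mul_mem (natCast_mem _ t) I_sub_one_div_sqrtTwo_mem)

end Zeta8Ring

section LatticeG31

/-- The `ℤ[ζ₈]`-lattice of vectors whose coordinates are congruent to each other modulo `√2` and
add up to `0` modulo `2`: a scaled `E₈`-lattice over `ℤ[i]`, with scalars extended to `ℤ[ζ₈]`. It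
is preserved by `G₃₁`. Divisibility is encoded by membership of the quotient in `ℤ[ζ₈]`. -/
def latticeG31 : Submodule zeta8Ring (Fin 4 → ℂ) where
  carrier := {w | w 0 ∈ zeta8Ring ∧ (∀ j, (w j - w 0) / sqrtTwo ∈ zeta8Ring) ∧
    (∑ j, w j) / 2 ∈ zeta8Ring}
  zero_mem' := by simp
  add_mem' := by
    rintro v w ⟨hv₀, hv, hv'⟩ ⟨hw₀, hw, hw'⟩
    refine ⟨add_mem hv₀ hw₀, fun j => ?_, ?_⟩
    · rw [Pi.add_apply, Pi.add_apply, add_sub_add_comm, add_div]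
      exact add_mem (hv j) (hw j)
    · simp only [Pi.add_apply]
      rw [Finset.sum_add_distrib, add_div]
      exact add_mem hv' hw'
  smul_mem' := by
    rintro ⟨c, hc⟩ w ⟨hw₀, hw, hw'⟩
    refine ⟨mul_mem hc hw₀, fun j => ?_, ?_⟩
    · rw [Pi.smul_apply, Pi.smul_apply, ← smul_sub, Subring.smul_def, smul_eq_mul, mul_div_assoc]
      exact mul_mem hc (hw j)
    · simp only [Pi.smul_apply]
      rw [← Finset.smul_sum, Subring.smul_def, smul_eq_mul, mul_div_assoc]
      exact mul_mem hc hw'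

theorem herm_div_two_mem {v w : Fin 4 → ℂ} (hv : v ∈ latticeG31) (hw : w ∈ latticeG31) :
    herm v w / 2 ∈ zeta8Ring := by
  obtain ⟨hv₀, hv, hv'⟩ := hv
  obtain ⟨hw₀, hw, hw'⟩ := hw
  have h : herm v w / 2 = v 0 * star ((∑ j, w j) / 2) + star (w 0) * ((∑ j, v j) / 2) -
      2 * (v 0 * star (w 0)) +
        ∑ j, (v j - v 0) / sqrtTwo * star ((w j - w 0) / sqrtTwo) := by
    have hmul (j : Fin 4) : (v j - v 0) / sqrtTwo * star ((w j - w 0) / sqrtTwo) =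
        (v j - v 0) * (star (w j) - star (w 0)) / 2 := by
      rw [star_div₀, star_sqrtTwo, star_sub, div_mul_div_comm, ← sq, sqrtTwo_sq]
    simp only [hmul, herm_eq_dotProduct, dotProduct, Pi.star_apply, Fin.sum_univ_four]
    simp only [star_div₀, star_add, star_ofNat]
    ring
  rw [h]
  exact add_mem (sub_mem (add_mem (mul_mem hv₀ (star_mem_zeta8Ring hw'))
    (mul_mem (star_mem_zeta8Ring hw₀) hv')) (mul_mem (ofNat_mem _ 2)
      (mul_mem hv₀ (star_mem_zeta8Ring hw₀))))
    (sum_mem fun j _ => mul_mem (hv j) (star_mem_zeta8Ring (hw j)))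

theorem reflMat_mem_setStabilizer_latticeG31 {u : Fin 4 → ℂ} (hu : u ∈ latticeG31)
    (h : herm u u = 4) : reflMat u (-1) ∈ setStabilizer (latticeG31 : Set (Fin 4 → ℂ)) := by
  intro w hw
  rw [reflMat_mulVec, h, show (1 - -1) / 4 * herm w u = herm w u / 2 by ring]
  exact sub_mem hw (latticeG31.smul_mem ⟨_, herm_div_two_mem hw hu⟩ hu)

theorem single_apply_mem (p j : Fin 4) : (Pi.single p 1 : Fin 4 → ℂ) j ∈ zeta8Ring := by
  rw [Pi.single_apply]
  split_ifs <;> simp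

theorem reflMat_single_sub_mem_setStabilizer {p q : Fin 4} (hpq : p ≠ q) (k : ℕ) :
    reflMat (Pi.single p 1 - I ^ k • Pi.single q 1) (-1) ∈
      setStabilizer (latticeG31 : Set (Fin 4 → ℂ)) := by
  rw [← reflMat_smul sqrtTwo_ne_zero]
  have hmem (j : Fin 4) : (Pi.single p 1 - I ^ k • Pi.single q 1 : Fin 4 → ℂ) j ∈ zeta8Ring :=
    sub_mem (single_apply_mem p j) (mul_mem (pow_mem I_mem k) (single_apply_mem q j))
  refine reflMat_mem_setStabilizer_latticeG31 ⟨mul_mem sqrtTwo_mem (hmem 0), fun j => ?_, ?_⟩ ?_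
  · rw [Pi.smul_apply, Pi.smul_apply, ← smul_sub, smul_eq_mul,
      mul_div_cancel_left₀ _ sqrtTwo_ne_zero]
    exact sub_mem (hmem j) (hmem 0)
  · have hsum : (∑ j, (sqrtTwo • (Pi.single p 1 - I ^ k • Pi.single q 1 : Fin 4 → ℂ)) j) / 2 =
        -((I ^ k - 1) / sqrtTwo) := by
      simp only [Pi.smul_apply, Pi.sub_apply, smul_eq_mul, ← Finset.mul_sum,
        Finset.sum_sub_distrib, Fintype.sum_pi_single', mul_one]
      field_simp [sqrtTwo_ne_zero]
      linear_combination (1 - I ^ k) * sqrtTwo_sq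
    rw [hsum]
    exact neg_mem (I_pow_sub_one_div_sqrtTwo_mem k)
  · have h : herm (Pi.single p 1 - I ^ k • Pi.single q 1) (Pi.single p 1 - I ^ k • Pi.single q 1) =
        1 + I ^ k * star (I ^ k) := by
      simp [herm_eq_dotProduct, hpq, hpq.symm, mul_comm]
    rw [herm_smul_smul, star_sqrtTwo, ← sq, sqrtTwo_sq, h, I_pow_mul_star]
    norm_num

theorem reflMat_single_mem_setStabilizer (p : Fin 4) :
    reflMat (Pi.single p 1) (-1) ∈ setStabilizer (latticeG31 : Set (Fin 4 → ℂ)) := by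
  rw [← reflMat_smul (two_ne_zero (α := ℂ))]
  refine reflMat_mem_setStabilizer_latticeG31
    ⟨mul_mem (ofNat_mem _ 2) (single_apply_mem p 0), fun j => ?_, ?_⟩ ?_
  · rw [Pi.smul_apply, Pi.smul_apply, ← smul_sub, ← sqrtTwo_sq, smul_eq_mul, sq, mul_assoc,
      mul_div_cancel_left₀ _ sqrtTwo_ne_zero]
    exact mul_mem sqrtTwo_mem (sub_mem (single_apply_mem p j) (single_apply_mem p 0))
  · simp [← Finset.mul_sum]
  · rw [herm_smul_smul, herm_eq_dotProduct]
    norm_num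

theorem reflMat_I_pow_mem_setStabilizer {t : Fin 4 → ℕ} (ht : Even (t 0 + t 1 + t 2 + t 3)) :
    reflMat (fun j => I ^ t j) (-1) ∈ setStabilizer (latticeG31 : Set (Fin 4 → ℂ)) := by
  refine reflMat_mem_setStabilizer_latticeG31 ⟨pow_mem I_mem _, fun j => ?_, ?_⟩ ?_
  · rw [← sub_sub_sub_cancel_right _ _ 1, sub_div]
    exact sub_mem (I_pow_sub_one_div_sqrtTwo_mem _) (I_pow_sub_one_div_sqrtTwo_mem _)
  · obtain ⟨s, hs⟩ := ht
    have hs' : (t 0 + t 1 + t 2 + t 3 : ℂ) = s + s := by exact_mod_cast hs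
    have hsum : (∑ j, I ^ t j) / 2 =
        ∑ j, (I ^ t j - 1 - t j * (I - 1)) / 2 + (s * (I - 1) + 2) := by
      simp only [Fin.sum_univ_four]
      linear_combination (I - 1) / 2 * hs'
    rw [hsum]
    exact add_mem (sum_mem fun j _ => I_pow_sub_div_two_mem _)
      (add_mem (mul_mem (natCast_mem _ s) (sub_mem I_mem (one_mem _))) (ofNat_mem _ 2))
  · simp only [herm_eq_dotProduct, dotProduct, Pi.star_apply, I_pow_mul_star, Finset.sum_const,
      Finset.card_univ, Fintype.card_fin, nsmul_eq_mul, Nat.cast_ofNat, mul_one]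

/-- The reflection group `G₃₁`. -/
def G31 : Submonoid (Matrix (Fin 4) (Fin 4) ℂ) :=
  Submonoid.closure {M | ∃ v ∈ rootsG31, M = reflMat v (-1)}

theorem G31_le_unitaryGroup : G31 ≤ unitaryGroup (Fin 4) ℂ := by
  rw [G31, Submonoid.closure_le]
  rintro _ ⟨v, -, rfl⟩
  exact reflMat_mem_unitaryGroup v (by simp)

theorem G31_le_setStabilizer : G31 ≤ setStabilizer (latticeG31 : Set (Fin 4 → ℂ)) := by
  rw [G31, Submonoid.closure_le]
  rintro _ ⟨v, (⟨p, q, k, hpq, -, rfl⟩ | ⟨p, rfl⟩) | ⟨t, ht, rfl⟩, rfl⟩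
  · exact reflMat_single_sub_mem_setStabilizer hpq.ne k
  · exact reflMat_single_mem_setStabilizer p
  · exact reflMat_I_pow_mem_setStabilizer ht

end LatticeG31

section Eigenbasis

/-- The number `-(1 + √2)`, for which `(x, y, -(1 + √2) x, -(1 + √2) y)` is an eigenvector of
`g³`. -/
def eigenRatio : ℂ := -(1 + sqrtTwo)

/-- The matrix whose columns form the basis of the `ζ₈`-eigenspace of `g³` used to identify it with
`ℂ²`. -/
def eigenbasis : Matrix (Fin 4) (Fin 2) ℂ :=
  !![1, 0; 0, 1; eigenRatio, 0; 0, eigenRatio]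

theorem eigenbasis_mulVec (t : Fin 2 → ℂ) :
    eigenbasis *ᵥ t = ![t 0, t 1, eigenRatio * t 0, eigenRatio * t 1] := by
  ext j
  fin_cases j <;> simp [eigenbasis, mulVec, dotProduct]

theorem eigenbasis_mulVecLin_injective : Function.Injective eigenbasis.mulVecLin := by
  intro s t h
  rw [mulVecLin_apply, mulVecLin_apply, eigenbasis_mulVec, eigenbasis_mulVec] at h
  ext j
  fin_cases j
  exacts [congrFun h 0, congrFun h 1]

theorem sqrtTwo_mul_eigenRatio : sqrtTwo * eigenRatio = eigenRatio - 1 := by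
  rw [eigenRatio]
  linear_combination -sqrtTwo_sq

theorem eigenRatio_mem : eigenRatio ∈ zeta8Ring :=
  neg_mem (add_mem (one_mem _) sqrtTwo_mem)

theorem conj_eigenRatio : starRingEnd ℂ eigenRatio = eigenRatio := by
  rw [eigenRatio, map_neg, map_add, map_one, starRingEnd_apply, star_sqrtTwo]

theorem conjTranspose_eigenbasis_mul_self :
    eigenbasisᴴ * eigenbasis = (1 + eigenRatio ^ 2) • (1 : Matrix (Fin 2) (Fin 2) ℂ) := by
  ext i j
  fin_cases i <;> fin_cases j <;>
    simp [eigenbasis, Matrix.mul_apply, Fin.sum_univ_four, conj_eigenRatio, sq]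

theorem one_add_eigenRatio_sq_ne_zero : 1 + eigenRatio ^ 2 ≠ 0 := by
  have h : 1 + eigenRatio ^ 2 = ((1 + (1 + √2) ^ 2 : ℝ) : ℂ) := by
    rw [eigenRatio, sqrtTwo]
    push_cast
    ring
  rw [h, ofReal_ne_zero]
  positivity

end Eigenbasis

section LatticeG9

/-- The `ℤ[ζ₈]`-lattice cut out by `latticeG31` on the column space of `eigenbasis`. -/
def latticeG9 : Submodule zeta8Ring (Fin 2 → ℂ) :=
  latticeG31.comap (eigenbasis.mulVecLin.restrictScalars zeta8Ring)

theorem mem_latticeG9_iff {t : Fin 2 → ℂ} :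
    t ∈ latticeG9 ↔ t 0 ∈ zeta8Ring ∧ (t 1 - t 0) / sqrtTwo ∈ zeta8Ring := by
  change eigenbasis *ᵥ t ∈ latticeG31 ↔ _
  rw [eigenbasis_mulVec]
  refine ⟨fun ⟨h₀, h, _⟩ => ⟨h₀, h 1⟩, fun ⟨h₀, h₁⟩ => ?_⟩
  have ht₁ : t 1 = t 0 + sqrtTwo * ((t 1 - t 0) / sqrtTwo) := by
    rw [mul_div_cancel₀ _ sqrtTwo_ne_zero, add_sub_cancel]
  have h₁' : t 1 ∈ zeta8Ring := by
    rw [ht₁]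
    exact add_mem h₀ (mul_mem sqrtTwo_mem h₁)
  have h₂ : (eigenRatio * t 0 - t 0) / sqrtTwo = eigenRatio * t 0 := by
    rw [div_eq_iff sqrtTwo_ne_zero]
    linear_combination -t 0 * sqrtTwo_mul_eigenRatio
  have h₃ : (eigenRatio * t 1 - t 0) / sqrtTwo = eigenRatio * t 1 + (t 1 - t 0) / sqrtTwo := by
    field_simp [sqrtTwo_ne_zero]
    linear_combination -t 1 * sqrtTwo_mul_eigenRatio
  refine ⟨h₀, fun j => ?_, ?_⟩
  · fin_cases j
    · simp
    · exact h₁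
    · change (eigenRatio * t 0 - t 0) / sqrtTwo ∈ zeta8Ring
      rw [h₂]
      exact mul_mem eigenRatio_mem h₀
    · change (eigenRatio * t 1 - t 0) / sqrtTwo ∈ zeta8Ring
      rw [h₃]
      exact add_mem (mul_mem eigenRatio_mem h₁') h₁
  · have hsum : (t 0 + t 1 + eigenRatio * t 0 + eigenRatio * t 1) / 2 =
        -((t 1 - t 0) / sqrtTwo + sqrtTwo * t 0) := by
      field_simp [sqrtTwo_ne_zero]
      rw [eigenRatio]
      linear_combination (t 0 - t 1) * sqrtTwo_sq
    rw [Fin.sum_univ_four]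
    change (t 0 + t 1 + eigenRatio * t 0 + eigenRatio * t 1) / 2 ∈ zeta8Ring
    rw [hsum]
    exact neg_mem (add_mem h₁ (mul_mem sqrtTwo_mem h₀))

theorem eq_of_add_sqrtTwo_mul_eq {m n k : ℤ} (h : (m : ℂ) + sqrtTwo * n = k) : m = k := by
  have h' : (m : ℝ) + √2 * n = k := by
    rw [sqrtTwo] at h
    exact_mod_cast h
  have hn : n = 0 := by
    by_contra hn
    refine (irrational_sqrt_two.mul_intCast hn).ne_int (k - m) ?_
    push_cast
    linear_combination h'
  rw [hn, Int.cast_zero, mul_zero, add_zero] at h'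
  exact_mod_cast h'

theorem exists_mul_star_eq_norm_add_norm_add (a b : GaussianInt) :
    ∃ n : ℤ, (a + zeta8 * b : ℂ) * star (a + zeta8 * b : ℂ) =
      (a.norm + b.norm : ℤ) + sqrtTwo * n := by
  refine ⟨(b * star a).re - (b * star a).im, ?_⟩
  rw [star_add, star_mul', star_zeta8, Complex.star_def, ← GaussianInt.toComplex_star,
    ← GaussianInt.toComplex_star, ← zeta8_mul_one_sub_I]
  simp only [GaussianInt.toComplex_def, Zsqrtd.norm_def, Zsqrtd.re_mul, Zsqrtd.im_mul,
    Zsqrtd.re_star, Zsqrtd.im_star]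
  push_cast
  linear_combination (-I * (b.re ^ 2 - b.im ^ 2 * I ^ 2) : ℂ) * zeta8_sq +
    (zeta8 * (a.re * b.im + a.im * b.im * I - a.im * b.re - a.im * b.im) - a.im ^ 2 - b.re ^ 2 +
      (I ^ 2 - 1) * b.im ^ 2) * I_sq

theorem even_norm_add_norm {a b : GaussianInt} (h : ⟨1, 1⟩ ∣ b - a) :
    Even (a.norm + b.norm) := by
  obtain ⟨c, hc⟩ := h
  rw [sub_eq_iff_eq_add'] at hc
  refine ⟨a.norm + c.norm + (a.re * (c.re - c.im) + a.im * (c.re + c.im)), ?_⟩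
  simp only [hc, Zsqrtd.norm_def, Zsqrtd.re_add, Zsqrtd.im_add, Zsqrtd.re_mul, Zsqrtd.im_mul]
  ring

theorem exists_eq_add_zeta8_mul_of_mem_latticeG9 {v : Fin 2 → ℂ} (hv : v ∈ latticeG9) :
    ∃ a b : Fin 2 → GaussianInt, (∀ j, v j = a j + zeta8 * b j) ∧
      Even ((a 0).norm + (a 1).norm) ∧ Even ((b 0).norm + (b 1).norm) := by
  obtain ⟨⟨a, b, h₀⟩, c, d, h₁⟩ := mem_latticeG9_iff.1 hv
  refine ⟨![a, a + ⟨1, 1⟩ * d], ![b, b + ⟨1, 1⟩ * (⟨0, -1⟩ * c)], ?_,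
    even_norm_add_norm ⟨d, add_sub_cancel_left _ _⟩,
    even_norm_add_norm ⟨⟨0, -1⟩ * c, add_sub_cancel_left _ _⟩⟩
  rw [div_eq_iff sqrtTwo_ne_zero] at h₁
  rw [Fin.forall_fin_two]
  refine ⟨h₀, ?_⟩
  simp only [cons_val_one, cons_val_fin_one, map_add, map_mul, GaussianInt.toComplex_def']
  push_cast
  linear_combination h₁ + h₀ - c * zeta8_mul_one_sub_I + d * sqrtTwo_mul_zeta8 +
    c * zeta8 * I_sq

theorem mem_Icc_of_norm_le_two {a : GaussianInt} (h : a.norm ≤ 2) :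
    a.re ∈ Set.Icc (-1) 1 ∧ a.im ∈ Set.Icc (-1) 1 := by
  rw [Zsqrtd.norm_def] at h
  refine ⟨⟨?_, ?_⟩, ?_, ?_⟩ <;> nlinarith [mul_self_nonneg a.re, mul_self_nonneg a.im]

theorem eq_I_pow_of_norm_eq_one {a : GaussianInt} (h : a.norm = 1) :
    ∃ n : ℕ, (a : ℂ) = I ^ n := by
  obtain ⟨⟨hx, hx'⟩, hy, hy'⟩ := mem_Icc_of_norm_le_two (h.trans_le one_le_two)
  rw [Zsqrtd.norm_def] at h
  rw [GaussianInt.toComplex_def]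
  generalize a.re = x, a.im = y at *
  obtain ⟨rfl, rfl⟩ | ⟨rfl, rfl⟩ | ⟨rfl, rfl⟩ | ⟨rfl, rfl⟩ :
      (x = 1 ∧ y = 0) ∨ (x = 0 ∧ y = 1) ∨ (x = -1 ∧ y = 0) ∨ (x = 0 ∧ y = -1) := by
    interval_cases x <;> interval_cases y <;> omega
  · exact ⟨0, by simp⟩
  · exact ⟨1, by simp⟩
  · exact ⟨2, by simp⟩
  · exact ⟨3, by simp⟩

theorem eq_sqrtTwo_mul_zeta8_pow_of_norm_eq_two {a : GaussianInt} (h : a.norm = 2) :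
    ∃ n : ℕ, (a : ℂ) = sqrtTwo * zeta8 ^ n := by
  obtain ⟨⟨hx, hx'⟩, hy, hy'⟩ := mem_Icc_of_norm_le_two h.le
  rw [Zsqrtd.norm_def] at h
  have hodd (n : ℕ) : sqrtTwo * zeta8 ^ (2 * n + 1) = (1 + I) * I ^ n := by
    rw [pow_succ', ← mul_assoc, sqrtTwo_mul_zeta8, pow_mul, zeta8_sq]
  rw [GaussianInt.toComplex_def]
  generalize a.re = x, a.im = y at *
  obtain ⟨rfl, rfl⟩ | ⟨rfl, rfl⟩ | ⟨rfl, rfl⟩ | ⟨rfl, rfl⟩ :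
      (x = 1 ∧ y = 1) ∨ (x = -1 ∧ y = 1) ∨ (x = -1 ∧ y = -1) ∨ (x = 1 ∧ y = -1) := by
    interval_cases x <;> interval_cases y <;> omega
  · exact ⟨1, by rw [hodd 0]; push_cast; ring⟩
  · exact ⟨3, by rw [hodd 1]; push_cast; linear_combination -I_sq⟩
  · exact ⟨5, by rw [hodd 2]; push_cast; linear_combination -(1 + I) * I_sq⟩
  · exact ⟨7, by rw [hodd 3, I_pow_three]; push_cast; linear_combination I_sq⟩

/-- The two components of `v` in `ℤ[i]² ⊕ ζ₈ ℤ[i]²` have even norms adding up to `2`, so one of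
them vanishes. -/
theorem exists_eq_zeta8_pow_mul_of_herm_eq_two {v : Fin 2 → ℂ} (hv : v ∈ latticeG9)
    (h : herm v v = 2) :
    ∃ (n : ℕ) (u : Fin 2 → GaussianInt), (∀ j, v j = zeta8 ^ n * u j) ∧
      (u 0).norm + (u 1).norm = 2 := by
  obtain ⟨a, b, hab, ⟨k, hk⟩, l, hl⟩ := exists_eq_add_zeta8_mul_of_mem_latticeG9 hv
  have hnorm : (a 0).norm + (b 0).norm + ((a 1).norm + (b 1).norm) = 2 := by
    obtain ⟨m, hm⟩ := exists_mul_star_eq_norm_add_norm_add (a 0) (b 0)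
    obtain ⟨n, hn⟩ := exists_mul_star_eq_norm_add_norm_add (a 1) (b 1)
    refine eq_of_add_sqrtTwo_mul_eq (n := m + n) ?_
    rw [herm_eq_dotProduct, dotProduct, Fin.sum_univ_two, Pi.star_apply, Pi.star_apply, hab, hab,
      hm, hn] at h
    push_cast at h ⊢
    linear_combination h
  have hnonneg (c : GaussianInt) : 0 ≤ c.norm := GaussianInt.norm_nonneg c
  have ha₀ := hnonneg (a 0)
  have ha₁ := hnonneg (a 1)
  have hb₀ := hnonneg (b 0)
  have hb₁ := hnonneg (b 1)
  obtain h₀ | h₀ : (a 0).norm + (a 1).norm = 0 ∨ (b 0).norm + (b 1).norm = 0 := by omega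
  · have ha : ∀ j, a j = 0 := by
      rw [Fin.forall_fin_two]
      exact ⟨GaussianInt.norm_eq_zero.1 (by omega), GaussianInt.norm_eq_zero.1 (by omega)⟩
    exact ⟨1, b, fun j => by rw [hab, ha, map_zero, zero_add, pow_one], by omega⟩
  · have hb : ∀ j, b j = 0 := by
      rw [Fin.forall_fin_two]
      exact ⟨GaussianInt.norm_eq_zero.1 (by omega), GaussianInt.norm_eq_zero.1 (by omega)⟩
    exact ⟨0, a, fun j => by rw [hab, hb, map_zero, mul_zero, add_zero, pow_zero, one_mul],
      by omega⟩

theorem eq_of_mem_latticeG9_of_herm_eq_two {v : Fin 2 → ℂ} (hv : v ∈ latticeG9)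
    (h : herm v v = 2) :
    (∃ n : ℕ, v = zeta8 ^ n • ![sqrtTwo, 0]) ∨ (∃ n : ℕ, v = zeta8 ^ n • ![0, sqrtTwo]) ∨
      ∃ n m : ℕ, v = zeta8 ^ n • ![1, I ^ m] := by
  obtain ⟨n, u, hu, hnorm⟩ := exists_eq_zeta8_pow_mul_of_herm_eq_two hv h
  have hv : v = zeta8 ^ n • ![(u 0 : ℂ), u 1] := by
    ext j
    fin_cases j
    exacts [hu 0, hu 1]
  have h₀ : 0 ≤ (u 0).norm := GaussianInt.norm_nonneg _
  have h₁ : 0 ≤ (u 1).norm := GaussianInt.norm_nonneg _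
  obtain ⟨h₀, h₁⟩ | ⟨h₀, h₁⟩ | ⟨h₀, h₁⟩ :
      ((u 0).norm = 2 ∧ (u 1).norm = 0) ∨ ((u 0).norm = 0 ∧ (u 1).norm = 2) ∨
        ((u 0).norm = 1 ∧ (u 1).norm = 1) := by omega
  · obtain ⟨k, hk⟩ := eq_sqrtTwo_mul_zeta8_pow_of_norm_eq_two h₀
    refine Or.inl ⟨n + k, ?_⟩
    rw [hv, hk, GaussianInt.norm_eq_zero.1 h₁, map_zero, pow_add, mul_smul, smul_vec2 (zeta8 ^ k)]
    simp [mul_comm]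
  · obtain ⟨k, hk⟩ := eq_sqrtTwo_mul_zeta8_pow_of_norm_eq_two h₁
    refine Or.inr (Or.inl ⟨n + k, ?_⟩)
    rw [hv, hk, GaussianInt.norm_eq_zero.1 h₀, map_zero, pow_add, mul_smul, smul_vec2 (zeta8 ^ k)]
    simp [mul_comm]
  · obtain ⟨k, hk⟩ := eq_I_pow_of_norm_eq_one h₀
    obtain ⟨l, hl⟩ := eq_I_pow_of_norm_eq_one h₁
    refine Or.inr (Or.inr ⟨n + 2 * k, l + 3 * k, ?_⟩)
    have hI : I ^ k * I ^ (3 * k) = 1 := by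
      rw [← pow_add, ← one_add_mul, pow_mul, I_pow_four, one_pow]
    rw [hv, hk, hl, pow_add zeta8, mul_smul, smul_vec2 (zeta8 ^ (2 * k)), pow_mul, zeta8_sq]
    simp [pow_add, mul_left_comm (I ^ k), hI]

end LatticeG9

section G9

/-- The generator `r₃` of `G₉`. -/
def R3 : Matrix (Fin 2) (Fin 2) ℂ :=
  (1 / sqrtTwo) • !![1, -1; -1, -1]

/-- The generator `r₄` of `G₉`. -/
def R4 : Matrix (Fin 2) (Fin 2) ℂ :=
  !![1, 0; 0, I]

/-- The reflection group `G₉`. -/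
def G9 : Submonoid (Matrix (Fin 2) (Fin 2) ℂ) :=
  Submonoid.closure {R3, R4}

theorem R3_mem_G9 : R3 ∈ G9 := Submonoid.subset_closure (Or.inl rfl)

theorem R4_mem_G9 : R4 ∈ G9 := Submonoid.subset_closure (Or.inr rfl)

theorem R4_pow (m : ℕ) : R4 ^ m = !![1, 0; 0, I ^ m] := by
  induction m with
  | zero => rw [pow_zero, pow_zero, one_fin_two]
  | succ m ih => rw [pow_succ, ih, R4, mul_fin_two, pow_succ]; simp

theorem R3_mul_R4_pow_three : (R3 * R4) ^ 3 = zeta8 • (1 : Matrix (Fin 2) (Fin 2) ℂ) := by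
  have h : zeta8 = (1 + I) / sqrtTwo := by
    rw [eq_div_iff sqrtTwo_ne_zero, mul_comm, sqrtTwo_mul_zeta8]
  have h3 : (1 / sqrtTwo) ^ 3 = 1 / (2 * sqrtTwo) := by
    rw [div_pow, one_pow, pow_succ, sqrtTwo_sq]
  have hcube : (!![1, -1; -1, -1] * !![1, 0; 0, I]) ^ 3 =
      (2 * (1 + I)) • (1 : Matrix (Fin 2) (Fin 2) ℂ) := by
    rw [pow_succ, sq, mul_fin_two, mul_fin_two, mul_fin_two, one_fin_two, smul_of]
    ext i j
    fin_cases i <;> fin_cases j <;> simp <;> ring_nf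
    linear_combination -2 * I_sq
  rw [R3, R4, Matrix.smul_mul, smul_pow, h3, h, hcube, smul_smul]
  congr 1
  field_simp [sqrtTwo_ne_zero]

theorem zeta8_pow_smul_mem_G9 (n : ℕ) {A : Matrix (Fin 2) (Fin 2) ℂ} (hA : A ∈ G9) :
    zeta8 ^ n • A ∈ G9 := by
  have h : zeta8 ^ n • A = ((R3 * R4) ^ 3) ^ n * A := by
    rw [R3_mul_R4_pow_three, smul_pow, one_pow, Matrix.smul_mul, Matrix.one_mul]
  rw [h]
  exact mul_mem (pow_mem (pow_mem (mul_mem R3_mem_G9 R4_mem_G9) 3) n) hA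

theorem conjTranspose_R3 : R3ᴴ = R3 := by
  rw [R3, conjTranspose_smul, star_div₀, star_one, star_sqrtTwo]
  ext i j
  fin_cases i <;> fin_cases j <;> simp

theorem conjTranspose_R4 : R4ᴴ = R4 ^ 3 := by
  rw [R4_pow, R4]
  ext i j
  fin_cases i <;> fin_cases j <;> simp

theorem conjTranspose_mem_G9 {A : Matrix (Fin 2) (Fin 2) ℂ} (hA : A ∈ G9) : Aᴴ ∈ G9 := by
  induction hA using Submonoid.closure_induction with
  | mem A h =>
    obtain rfl | rfl := h
    · rw [conjTranspose_R3]
      exact R3_mem_G9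
    · rw [conjTranspose_R4]
      exact pow_mem R4_mem_G9 3
  | one => rw [conjTranspose_one]; exact one_mem _
  | mul A B _ _ hA hB => rw [conjTranspose_mul]; exact mul_mem hB hA

theorem R3_mulVec_single : R3 *ᵥ ![sqrtTwo, 0] = ![1, -1] := by
  rw [R3, smul_mulVec]
  ext j
  fin_cases j <;> simp [sqrtTwo_ne_zero]

theorem exists_mem_G9_mulVec_eq {v : Fin 2 → ℂ} (hv : v ∈ latticeG9) (h : herm v v = 2) :
    ∃ A ∈ G9, A *ᵥ ![sqrtTwo, 0] = v := by
  suffices ∃ n : ℕ, ∃ A ∈ G9, zeta8 ^ n • A *ᵥ ![sqrtTwo, 0] = v by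
    obtain ⟨n, A, hA, hv⟩ := this
    exact ⟨zeta8 ^ n • A, zeta8_pow_smul_mem_G9 n hA, by rw [smul_mulVec, hv]⟩
  obtain ⟨n, rfl⟩ | ⟨n, rfl⟩ | ⟨n, m, rfl⟩ := eq_of_mem_latticeG9_of_herm_eq_two hv h
  · exact ⟨n, 1, one_mem _, by rw [one_mulVec]⟩
  · refine ⟨n + 4, R3 * R4 ^ 2 * R3,
      mul_mem (mul_mem R3_mem_G9 (pow_mem R4_mem_G9 2)) R3_mem_G9, ?_⟩
    have hflip : R4 ^ 2 *ᵥ ![1, -1] = ![1, 1] := by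
      rw [R4_pow]
      ext j
      fin_cases j <;> simp
    have hR3 : R3 *ᵥ ![1, 1] = ![0, -sqrtTwo] := by
      rw [R3, smul_mulVec]
      ext j
      fin_cases j
      · simp
      · suffices sqrtTwo⁻¹ * (-1 + -1) = -sqrtTwo by simpa
        rw [inv_mul_eq_iff_eq_mul₀ sqrtTwo_ne_zero]
        linear_combination sqrtTwo_sq
    rw [← mulVec_mulVec, R3_mulVec_single, ← mulVec_mulVec, hflip, hR3, pow_add, zeta8_pow_four]
    simp
  · refine ⟨n, R4 ^ (m + 2) * R3, mul_mem (pow_mem R4_mem_G9 _) R3_mem_G9, ?_⟩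
    rw [← mulVec_mulVec, R3_mulVec_single, R4_pow]
    ext j
    fin_cases j <;> simp [pow_add]

theorem eq_R4_pow_of_mulVec_eq {B : Matrix (Fin 2) (Fin 2) ℂ} (hB : B ∈ unitaryGroup (Fin 2) ℂ)
    (hB' : B ∈ setStabilizer (latticeG9 : Set (Fin 2 → ℂ)))
    (h : B *ᵥ ![sqrtTwo, 0] = ![sqrtTwo, 0]) : ∃ m : ℕ, B = R4 ^ m := by
  have hstar : Bᴴ *ᵥ ![sqrtTwo, 0] = ![sqrtTwo, 0] :=
    calc Bᴴ *ᵥ ![sqrtTwo, 0] = (Bᴴ * B) *ᵥ ![sqrtTwo, 0] := by rw [← mulVec_mulVec, h]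
      _ = ![sqrtTwo, 0] := by
        rw [← star_eq_conjTranspose, mem_unitaryGroup_iff'.1 hB, one_mulVec]
  have h₀₀ : B 0 0 = 1 := by
    simpa [mulVec, vecHead, sqrtTwo_ne_zero] using congrFun h 0
  have h₁₀ : B 1 0 = 0 := by
    simpa [mulVec, vecHead, sqrtTwo_ne_zero] using congrFun h 1
  have h₀₁ : B 0 1 = 0 := by
    simpa [mulVec, vecHead, sqrtTwo_ne_zero] using congrFun hstar 1
  have hB_eq : B = !![1, 0; 0, B 1 1] := by
    conv_lhs => rw [eta_fin_two B, h₀₀, h₀₁, h₁₀]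
  have hones : B *ᵥ ![1, 1] = ![1, B 1 1] := by
    rw [hB_eq]
    ext j
    fin_cases j <;> simp
  have hmem : ![1, B 1 1] ∈ latticeG9 := by
    rw [← hones]
    exact hB' _ (mem_latticeG9_iff.2 (by simp))
  have hnorm : herm ![1, B 1 1] ![1, B 1 1] = 2 := by
    rw [← hones, herm_mulVec_of_mem_unitaryGroup hB, herm_vec2]
    norm_num
  obtain ⟨n, hn⟩ | ⟨n, hn⟩ | ⟨n, m, hm⟩ := eq_of_mem_latticeG9_of_herm_eq_two hmem hnorm
  · have h₁₁ : B 1 1 = 0 := by simpa using congrFun hn 1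
    norm_num [h₁₁, herm_vec2] at hnorm
  · simpa using congrFun hn 0
  · have hn : zeta8 ^ n = 1 := by simpa using (congrFun hm 0).symm
    have h₁₁ : B 1 1 = I ^ m := by simpa [hn] using congrFun hm 1
    exact ⟨m, by rw [hB_eq, h₁₁, R4_pow]⟩

end G9

section Subquotient

theorem reflMat_single_sub_mem_G31 {p q : Fin 4} (hpq : p < q) {k : ℕ} (hk : k < 4) :
    reflMat (Pi.single p 1 - I ^ k • Pi.single q 1) (-1) ∈ G31 :=
  Submonoid.subset_closure ⟨_, Or.inl (Or.inl ⟨p, q, k, hpq, hk, rfl⟩), rfl⟩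

theorem reflMat_single_mem_G31 (p : Fin 4) : reflMat (Pi.single p 1) (-1) ∈ G31 :=
  Submonoid.subset_closure ⟨_, Or.inl (Or.inr ⟨p, rfl⟩), rfl⟩

theorem reflMat_I_pow_mem_G31 {t : Fin 4 → ℕ} (ht : Even (t 0 + t 1 + t 2 + t 3)) :
    reflMat (fun j => I ^ t j) (-1) ∈ G31 :=
  Submonoid.subset_closure ⟨_, Or.inr ⟨t, ht, rfl⟩, rfl⟩

theorem R3_mem_subquotient : R3 ∈ subquotient G31 eigenbasis := by
  have h₁ : reflMat ![1, 0, 0, -1] (-1) ∈ G31 := by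
    convert reflMat_single_sub_mem_G31 (p := 0) (q := 3) (by decide) (k := 0) (by decide) using 2
    ext j
    fin_cases j <;> simp
  have h₂ : reflMat ![1, -1, 1, 1] (-1) ∈ G31 := by
    convert reflMat_I_pow_mem_G31 (t := ![0, 2, 0, 0]) (by decide) using 2
    ext j
    fin_cases j <;> simp
  refine ⟨reflMat ![1, 0, 0, -1] (-1) * reflMat ![1, -1, 1, 1] (-1), mul_mem h₁ h₂, ?_⟩
  have hprod : reflMat ![1, 0, 0, -1] (-1) * reflMat ![1, -1, 1, 1] (-1) =
      (1 / 2 : ℂ) • !![-1, 1, -1, 1; 1, 1, 1, 1; -1, 1, 1, -1; 1, 1, -1, -1] := by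
    ext i j
    fin_cases i <;> fin_cases j <;>
      simp [reflMat, herm, Matrix.mul_apply, Fin.sum_univ_four] <;> norm_num
  rw [hprod, R3, eigenbasis, eigenRatio]
  ext i j
  fin_cases i <;> fin_cases j <;> simp [Matrix.mul_apply, Fin.sum_univ_four] <;>
    field_simp [sqrtTwo_ne_zero]
  all_goals first | linear_combination sqrtTwo_sq | linear_combination -sqrtTwo_sq

theorem R4_mem_subquotient : R4 ∈ subquotient G31 eigenbasis := by
  have h₁ : reflMat ![0, 1, 0, -1] (-1) ∈ G31 := by
    convert reflMat_single_sub_mem_G31 (p := 1) (q := 3) (by decide) (k := 0) (by decide) using 2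
    ext j
    fin_cases j <;> simp
  have h₂ : reflMat ![0, 1, 0, -I] (-1) ∈ G31 := by
    convert reflMat_single_sub_mem_G31 (p := 1) (q := 3) (by decide) (k := 1) (by decide) using 2
    ext j
    fin_cases j <;> simp
  have h₃ : reflMat ![0, 0, 0, 1] (-1) ∈ G31 := by
    convert reflMat_single_mem_G31 3 using 2
    ext j
    fin_cases j <;> simp
  refine ⟨reflMat ![0, 1, 0, -1] (-1) * reflMat ![0, 1, 0, -I] (-1) * reflMat ![0, 0, 0, 1] (-1),
    mul_mem (mul_mem h₁ h₂) h₃, ?_⟩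
  have hprod : reflMat ![0, 1, 0, -1] (-1) * reflMat ![0, 1, 0, -I] (-1) *
      reflMat ![0, 0, 0, 1] (-1) = diagonal ![1, I, 1, I] := by
    ext i j
    fin_cases i <;> fin_cases j <;>
      simp [reflMat, herm, Matrix.mul_apply, Fin.sum_univ_four] <;> norm_num
    · ring
    · linear_combination -I_sq
  rw [hprod, R4, eigenbasis]
  ext i j
  fin_cases i <;> fin_cases j <;> simp [mul_comm]

theorem G9_le_subquotient : G9 ≤ subquotient G31 eigenbasis := by
  rw [G9, Submonoid.closure_le]
  rintro _ (rfl | rfl)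
  exacts [R3_mem_subquotient, R4_mem_subquotient]

theorem subquotient_G31_le_unitaryGroup_inf_setStabilizer : subquotient G31 eigenbasis ≤
    unitaryGroup (Fin 2) ℂ ⊓ setStabilizer (latticeG9 : Set (Fin 2 → ℂ)) :=
  le_inf (subquotient_le_unitaryGroup G31_le_unitaryGroup one_add_eigenRatio_sq_ne_zero
    conjTranspose_eigenbasis_mul_self)
    (subquotient_le_setStabilizer G31_le_setStabilizer eigenbasis)

theorem unitaryGroup_inf_setStabilizer_le_G9 :
    unitaryGroup (Fin 2) ℂ ⊓ setStabilizer (latticeG9 : Set (Fin 2 → ℂ)) ≤ G9 := by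
  rintro M ⟨hM, hM'⟩
  have hG9 : G9 ≤ unitaryGroup (Fin 2) ℂ ⊓ setStabilizer (latticeG9 : Set (Fin 2 → ℂ)) :=
    G9_le_subquotient.trans subquotient_G31_le_unitaryGroup_inf_setStabilizer
  have hmem : ![sqrtTwo, 0] ∈ latticeG9 :=
    mem_latticeG9_iff.2 ⟨sqrtTwo_mem, by simp [sqrtTwo_ne_zero]⟩
  have hnorm : herm (M *ᵥ ![sqrtTwo, 0]) (M *ᵥ ![sqrtTwo, 0]) = 2 := by
    rw [herm_mulVec_of_mem_unitaryGroup hM, herm_vec2, star_sqrtTwo, ← sq, sqrtTwo_sq, zero_mul,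
      add_zero]
  obtain ⟨A, hA, hAM⟩ := exists_mem_G9_mulVec_eq (hM' _ hmem) hnorm
  have hA_star := hG9 (conjTranspose_mem_G9 hA)
  have hfix : (Aᴴ * M) *ᵥ ![sqrtTwo, 0] = ![sqrtTwo, 0] := by
    rw [← mulVec_mulVec, ← hAM, mulVec_mulVec, ← star_eq_conjTranspose,
      mem_unitaryGroup_iff'.1 (hG9 hA).1, one_mulVec]
  obtain ⟨m, hm⟩ := eq_R4_pow_of_mulVec_eq (mul_mem hA_star.1 hM) (mul_mem hA_star.2 hM') hfix
  have hM_eq : M = A * R4 ^ m := by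
    rw [← hm, ← Matrix.mul_assoc, ← star_eq_conjTranspose, mem_unitaryGroup_iff.1 (hG9 hA).1,
      Matrix.one_mul]
  rw [hM_eq]
  exact mul_mem hA (pow_mem R4_mem_G9 m)

theorem subquotient_G31_eq_G9 : subquotient G31 eigenbasis = G9 :=
  le_antisymm (subquotient_G31_le_unitaryGroup_inf_setStabilizer.trans
    unitaryGroup_inf_setStabilizer_le_G9) G9_le_subquotient

end Subquotient

section Eigenspace

theorem exp_pi_mul_I_div_twelve_pow_three : exp (Real.pi * I / 12) ^ 3 = zeta8 := by
  rw [← exp_nat_mul, zeta8]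
  congr 1
  push_cast
  ring

/-- The matrix `H` with `g³ = -(ζ₈ / √2) H`: the `ζ₈`-eigenspace of `g³` is the
`(-√2)`-eigenspace of `H`. -/
def eigenMatrix : Matrix (Fin 4) (Fin 4) ℂ :=
  !![1, 0, 1, 0; 0, 1, 0, 1; 1, 0, -1, 0; 0, 1, 0, -1]

/-- The element `g` of `G₃₁`, as a product of five reflections. -/
def regularElement : Matrix (Fin 4) (Fin 4) ℂ :=
  reflMat ![0, 0, 0, 1] (-1) * reflMat ![1, -1, 0, 0] (-1) * reflMat ![1, 0, 0, 1] (-1) *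
    reflMat ![1, I, 1, -I] (-1) * reflMat ![1, 1, 1, 1] (-1)

theorem regularElement_eq : regularElement =
    (1 / 2 : ℂ) • !![-1, I, -1, I; 1, I, 1, I; -1, I, 1, -I; 1, I, -1, -I] := by
  have h₁ : reflMat ![0, 0, 0, 1] (-1) * reflMat ![1, -1, 0, 0] (-1) *
      reflMat ![1, 0, 0, 1] (-1) =
      !![0, 1, 0, 0; 0, 0, 0, -1; 0, 0, 1, 0; 1, 0, 0, 0] := by
    ext i j
    fin_cases i <;> fin_cases j <;>
      simp [reflMat, herm, Matrix.mul_apply, Fin.sum_univ_four]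
    norm_num
  have h₂ : reflMat ![1, I, 1, -I] (-1) =
      (1 / 2 : ℂ) • !![1, I, -1, -I; -I, 1, -I, 1; -1, I, 1, -I; I, 1, I, 1] := by
    ext i j
    fin_cases i <;> fin_cases j <;> simp [reflMat, herm, Fin.sum_univ_four] <;> ring_nf
    all_goals rw [I_sq]; norm_num
  have h₃ : reflMat ![1, 1, 1, 1] (-1) =
      (1 / 2 : ℂ) • !![1, -1, -1, -1; -1, 1, -1, -1; -1, -1, 1, -1; -1, -1, -1, 1] := by
    ext i j
    fin_cases i <;> fin_cases j <;> simp [reflMat, herm, Fin.sum_univ_four] <;> norm_num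
  rw [regularElement, h₁, h₂, h₃]
  ext i j
  fin_cases i <;> fin_cases j <;> simp [Matrix.mul_apply, Fin.sum_univ_four] <;> ring

theorem regularElement_pow_three :
    regularElement ^ 3 = (-(zeta8 / sqrtTwo)) • eigenMatrix := by
  have h : zeta8 / sqrtTwo = (1 + I) / 2 := by
    rw [div_eq_div_iff sqrtTwo_ne_zero two_ne_zero]
    linear_combination sqrtTwo * sqrtTwo_mul_zeta8 - zeta8 * sqrtTwo_sq
  have hcube : !![-1, I, -1, I; 1, I, 1, I; -1, I, 1, -I; 1, I, -1, -I] ^ 3 =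
      (-4 * (1 + I)) • eigenMatrix := by
    rw [pow_succ, sq, eigenMatrix]
    ext i j
    fin_cases i <;> fin_cases j <;> simp [Matrix.mul_apply, Fin.sum_univ_four] <;> ring_nf <;>
      simp only [I_sq] <;> ring
  rw [h, regularElement_eq, smul_pow, hcube, smul_smul]
  congr 1
  ring

theorem eigenMatrix_mulVec (v : Fin 4 → ℂ) :
    eigenMatrix *ᵥ v = ![v 0 + v 2, v 1 + v 3, v 0 - v 2, v 1 - v 3] := by
  ext j
  fin_cases j <;> simp [eigenMatrix, mulVec, dotProduct, Fin.sum_univ_four, sub_eq_add_neg]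

theorem range_eigenbasis_mulVecLin :
    LinearMap.range eigenbasis.mulVecLin = eigSpace (regularElement ^ 3) zeta8 := by
  ext v
  have h : v ∈ eigSpace (regularElement ^ 3) zeta8 ↔ eigenMatrix *ᵥ v = -sqrtTwo • v := by
    have hsmul : zeta8 • v = -(zeta8 / sqrtTwo) • -sqrtTwo • v := by
      rw [smul_smul, neg_mul_neg, div_mul_cancel₀ _ sqrtTwo_ne_zero]
    have hne : -(zeta8 / sqrtTwo) ≠ 0 := neg_ne_zero.2 (div_ne_zero (exp_ne_zero _) sqrtTwo_ne_zero)
    rw [eigSpace, Module.End.mem_eigenspace_iff, mulVecLin_apply, regularElement_pow_three,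
      smul_mulVec, hsmul, (smul_right_injective _ hne).eq_iff]
  have hratio : 1 + eigenRatio = -sqrtTwo := by rw [eigenRatio]; ring
  rw [h, eigenMatrix_mulVec]
  constructor
  · rintro ⟨t, rfl⟩
    rw [mulVecLin_apply, eigenbasis_mulVec]
    ext j
    fin_cases j <;> simp
    · linear_combination t 0 * hratio
    · linear_combination t 1 * hratio
    · linear_combination t 0 * sqrtTwo_mul_eigenRatio
    · linear_combination t 1 * sqrtTwo_mul_eigenRatio
  · intro h
    refine ⟨![v 0, v 1], ?_⟩
    have h₂ : v 0 + v 2 = -sqrtTwo * v 0 := congrFun h 0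
    have h₃ : v 1 + v 3 = -sqrtTwo * v 1 := congrFun h 1
    rw [mulVecLin_apply, eigenbasis_mulVec]
    ext j
    fin_cases j
    · rfl
    · rfl
    · change eigenRatio * v 0 = v 2
      linear_combination v 0 * hratio - h₂
    · change eigenRatio * v 1 = v 3
      linear_combination v 1 * hratio - h₃

theorem finrank_range_eigenbasis_mulVecLin :
    Module.finrank ℂ (LinearMap.range eigenbasis.mulVecLin) = 2 := by
  rw [LinearMap.finrank_range_of_inj eigenbasis_mulVecLin_injective, Module.finrank_fin_fun]

end Eigenspace

end SubquotientOfG31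

/-- The `8`-reflection subquotient of `G₃₁` is isomorphic to `G₉`:
with `ζ = e^{πi/12}`, `g` the product of the five listed reflections of `G₃₁`, and `E`
the `ζ^3`-eigenspace of `g^3` (a `2`-dimensional subspace), there is a `ℂ`-linear
isomorphism `ψ : E ≅ ℂ^2` conjugating `π_E(N_E)` onto `G₉`. -/
theorem statement_17 (ζ : ℂ) (hζ : ζ = Complex.exp (Real.pi * Complex.I / 12))
    (G31 : Submonoid (Matrix (Fin 4) (Fin 4) ℂ))
    (hG31 : G31 = Submonoid.closure {M | ∃ v ∈ rootsG31, M = reflMat v (-1)})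
    (g : Matrix (Fin 4) (Fin 4) ℂ)
    (hg : g = reflMat ![0, 0, 0, 1] (-1) * reflMat ![1, -1, 0, 0] (-1) *
      reflMat ![1, 0, 0, 1] (-1) *
      reflMat ![1, Complex.I, 1, -Complex.I] (-1) * reflMat ![1, 1, 1, 1] (-1))
    (E : Submodule ℂ (Fin 4 → ℂ)) (hE : E = eigSpace (g ^ 3) (ζ ^ 3))
    (r₃ r₄ : Matrix (Fin 2) (Fin 2) ℂ)
    (hr₃ : r₃ = (1 / (Real.sqrt 2 : ℂ)) • !![1, -1; -1, -1])
    (hr₄ : r₄ = !![1, 0; 0, Complex.I])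
    (G9 : Submonoid (Matrix (Fin 2) (Fin 2) ℂ))
    (hG9 : G9 = Submonoid.closure {r₃, r₄}) :
    Module.finrank ℂ E = 2 ∧
    ∃ Φ : (Fin 2 → ℂ) →ₗ[ℂ] (Fin 4 → ℂ), Function.Injective Φ ∧
      LinearMap.range Φ = E ∧
      (G9 : Set (Matrix (Fin 2) (Fin 2) ℂ)) =
        {M' | ∃ M ∈ G31, (∀ v ∈ E, M.mulVec v ∈ E) ∧
          ∀ t : Fin 2 → ℂ, M.mulVec (Φ t) = Φ (M'.mulVec t)} := by
  obtain rfl : G31 = Paper.G31 := hG31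
  obtain rfl : g = regularElement := hg
  obtain rfl : r₃ = R3 := hr₃
  obtain rfl : r₄ = R4 := hr₄
  obtain rfl : G9 = Paper.G9 := hG9
  rw [hζ, exp_pi_mul_I_div_twelve_pow_three, ← range_eigenbasis_mulVecLin] at hE
  subst hE
  refine ⟨finrank_range_eigenbasis_mulVecLin, eigenbasis.mulVecLin,
    eigenbasis_mulVecLin_injective, rfl, ?_⟩
  rw [← subquotient_G31_eq_G9]
  exact Set.ext fun A => mem_subquotient_iff

end
end Paper
end

section
/- Let ζ = e^{πi/6}, let G_8 ⊂ GL_2(C) be generated by r_4 = [[1, 0], [0, i]] and r_4' = (1/2)·[[1+i, −1+i], [−1+i, 1+i]], and let g = r_4 r_4'. Then g has eigenvalues ζ and ζ^5 with respective eigenvectors q_1 = (1/√(6+2√3))·(1+√3, −1−i)^T and q_2 = (1/√(6−2√3))·(√3−1, 1+i)^T, the vector q_1 is a regular vector of G_8, and (g, ζ, q_1) is an admissible triplet of G_8. Moreover, with z = (z_1, z_2) the (g,ζ)-graded coordinate system dual to (q_1, q_2), the polynomials x_1 = (√3/16)·t_O and x_2 = (3/(8√2))·h_O, where t_O = u_1^{12}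 − 33 u_1^8 u_2^4 − 33 u_1^4 u_2^8 + u_2^{12} and h_O = u_1^8 + 14 u_1^4 u_2^4 + u_2^8, form a set of basic invariants of G_8 (of degrees 12 and 8) which is good with respect to (g, ζ, q_1) and compatible with z at q_1. -/
open Matrix MvPolynomial

namespace Paper

noncomputable section

/-- The subalgebra of polynomials invariant under a set of matrices. -/
def matInvariantAlgebra {ι : Type*} [Fintype ι] (S : Set (Matrix ι ι ℂ)) :
    Subalgebra ℂ (MvPolynomial ι ℂ) where
  carrier := {P | ∀ M ∈ S, ∀ v : ι → ℂ, eval (M.mulVec v) P = eval v P}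
  mul_mem' := by
    intro P Q hP hQ M hM v
    simp only [_root_.map_mul, hP M hM v, hQ M hM v]
  add_mem' := by
    intro P Q hP hQ M hM v
    simp only [_root_.map_add, hP M hM v, hQ M hM v]
  algebraMap_mem' := by
    intro r M hM v
    simp [MvPolynomial.algebraMap_eq]

/-- `x` is a set of basic invariants with degrees `d` for the group of matrices `S`:
algebraically independent homogeneous invariant polynomials generating the invariant
ring. -/
structure IsBasicInvariantsMat {ι : Type*} [Fintype ι] (S : Set (Matrix ι ι ℂ)) (d : ι → ℕ)
    (x : ι → MvPolynomial ι ℂ) : Prop where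
  homog : ∀ α, (x α).IsHomogeneous (d α)
  invariant : ∀ α, x α ∈ matInvariantAlgebra S
  indep : AlgebraicIndependent ℂ x
  gen : Algebra.adjoin ℂ (Set.range x) = matInvariantAlgebra S

/-- Directional derivative of a polynomial along the vector `w`; if `w = b β` for a
basis `b` with dual coordinates `z`, this is `∂/∂z_β`. -/
def dirDeriv {n : ℕ} (w : Fin n → ℂ) (P : MvPolynomial (Fin n) ℂ) : MvPolynomial (Fin n) ℂ :=
  ∑ i, w i • pderiv i P

/-- Iterated derivative `∂^(a_1+...+a_n) / ∂z_1^(a_1) ... ∂z_n^(a_n)` in the coordinates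
dual to the basis `b`. -/
def multiDeriv {n : ℕ} (b : Fin n → (Fin n → ℂ)) (a : Fin n → ℕ)
    (P : MvPolynomial (Fin n) ℂ) : MvPolynomial (Fin n) ℂ :=
  (List.finRange n).foldl (fun Q i => (fun R => dirDeriv (b i) R)^[a i] Q) P

/-- The basic invariants `x` are compatible at `q` with the coordinates dual to `b`:
`∂x_α/∂z_β (q) = δ_{αβ}`. -/
def IsCompatible {n : ℕ} (b : Fin n → (Fin n → ℂ)) (q : Fin n → ℂ)
    (x : Fin n → MvPolynomial (Fin n) ℂ) : Prop :=
  ∀ α β, eval q (dirDeriv (b β) (x α)) = if α = β then 1 else 0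

/-- The basic invariants `x` (with degrees `d`) are good with respect to the admissible
triplet, in the graded coordinates dual to `b`: all higher derivatives
`∂^a x_α/∂z^a (q)` with `Σ a_i d_i = d_α`, `Σ a_i ≥ 2` vanish at `q`. -/
def IsGood {n : ℕ} (d : Fin n → ℕ) (b : Fin n → (Fin n → ℂ)) (q : Fin n → ℂ)
    (x : Fin n → MvPolynomial (Fin n) ℂ) : Prop :=
  ∀ α (a : Fin n → ℕ), (∑ i, a i * d i = d α) → 2 ≤ ∑ i, a i →
    eval q (multiDeriv b a (x α)) = 0
/-- A matrix is a reflection: it is nontrivial and fixes a hyperplane pointwise. -/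
def IsReflection {n : ℕ} (M : Matrix (Fin n) (Fin n) ℂ) : Prop :=
  M ≠ 1 ∧ Module.finrank ℂ (LinearMap.ker (M - 1).mulVecLin) = n - 1

/-!
Let `q` be an eigenvector of some `g` in the group for a primitive `d`-th root of unity, `t` an
invariant of degree `d` with `t(q) ≠ 0`, and `h` a square-free invariant form whose zeros are the
multiples of the points in the orbit of `q`. An invariant form not vanishing at `q` has degree
divisible by `d`, so subtracting a multiple of a power of `t` makes it vanish at `q`, hence at all
zeros of `h`; by the Nullstellensatz it is then divisible by `h`. Induction on the degree shows that
`t` and `h` generate the invariant ring. For `G₈` this applies to `q₁`, `t_O` and `h_O`.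

Differentiating `x_α(g v) = x_α(v)` at `q₁` along an eigenvector of `g` gives `∂x_α/∂z_β(q₁) = 0`
for `α ≠ β`; Euler's relation computes `∂x₁/∂z₁(q₁)`, and `∂x₂/∂z₂(q₁)` is a direct evaluation.
The Jacobian of `x` at `q₁` is thus invertible, so `x₁`, `x₂` are algebraically independent, and
an element fixing `q₁`, preserving the differentials of `x₁` and `x₂` there, is the identity: `q₁`
is regular.
-/

section Polynomial

variable {σ R : Type*}

theorem eval_smul_of_isHomogeneous [CommSemiring R] {P : MvPolynomial σ R} {n : ℕ}
    (hP : P.IsHomogeneous n) (c : R) (v : σ → R) : eval (c • v) P = c ^ n * eval v P := by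
  rw [eval_eq, eval_eq, Finset.mul_sum]
  refine Finset.sum_congr rfl fun d hd => ?_
  have hdeg : ∑ i ∈ d.support, d i = n := (hP.degree_eq_sum_deg_support hd).symm
  simp only [Pi.smul_apply, smul_eq_mul, mul_pow, Finset.prod_mul_distrib,
    Finset.prod_pow_eq_pow_sum, hdeg]
  ring

theorem dvd_of_squarefree_of_forall_eval_eq_zero [Finite σ] [Field R] [IsAlgClosed R]
    {p P : MvPolynomial σ R} (hp : Squarefree p) (hP : ∀ v, eval v p = 0 → eval v P = 0) :
    p ∣ P := by
  have hrad : P ∈ (Ideal.span {p}).radical := by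
    rw [← vanishingIdeal_zeroLocus_eq_radical (K := R)]
    intro v hv
    exact hP v (hv p (Ideal.mem_span_singleton_self p))
  obtain ⟨k, hk⟩ := hrad
  exact hp.isRadical k P (Ideal.mem_span_singleton.mp hk)

theorem squarefree_of_isRelPrime_pderiv [CommRing R] {p : MvPolynomial σ R} {i j : σ}
    (hp : IsRelPrime (pderiv i p) (pderiv j p)) : Squarefree p := by
  rintro d ⟨e, rfl⟩
  have hd (k : σ) : d ∣ pderiv k (d * d * e) := by
    rw [pderiv_mul, pderiv_mul]
    exact ⟨pderiv k d * e + pderiv k d * e + d * pderiv k e, by ring⟩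
  exact hp (hd i) (hd j)

theorem derivation_aeval [Fintype σ] {A M : Type*} [CommSemiring R] [CommSemiring A] [Algebra R A]
    [AddCommMonoid M] [Module A M] [Module R M] (D : Derivation R A M)
    (x : σ → A) (P : MvPolynomial σ R) :
    D (aeval x P) = ∑ i, aeval x (pderiv i P) • D (x i) := by
  classical
  induction P using MvPolynomial.induction_on with
  | C c => simp
  | add P Q hP hQ => simp only [map_add, hP, hQ, add_smul, Finset.sum_add_distrib]
  | mul_X P j hP =>
    simp [hP, pderiv_X, Pi.single_apply, add_smul, Finset.sum_add_distrib, Finset.smul_sum,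
      mul_smul, apply_ite, ite_smul]

theorem totalDegree_pderiv_le [CommSemiring R] (i : σ) (P : MvPolynomial σ R) :
    (pderiv i P).totalDegree ≤ P.totalDegree - 1 := by
  refine Finset.sup_le fun m hm => ?_
  rw [mem_support_iff, coeff_pderiv] at hm
  have hdeg := le_totalDegree (mem_support_iff.mpr (left_ne_zero_of_mul hm))
  rw [Finsupp.sum_add_index' (fun _ => rfl) (fun _ _ _ => rfl),
    Finsupp.sum_single_index rfl] at hdeg
  omega

theorem eq_C_of_forall_pderiv_eq_zero [CommRing R] [IsDomain R] [CharZero R]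
    {P : MvPolynomial σ R} (hP : ∀ i, pderiv i P = 0) : P = C (coeff 0 P) := by
  classical
  ext m
  rw [coeff_C]
  split_ifs with hm
  · rw [hm]
  · obtain ⟨i, hi⟩ := Finsupp.ne_iff.mp (Ne.symm hm)
    have hcoeff := coeff_pderiv (i := i) P (m - Finsupp.single i 1)
    rw [hP i, coeff_zero, Finsupp.sub_add_single_one_cancel hi] at hcoeff
    exact (mul_eq_zero.mp hcoeff.symm).resolve_right (Nat.cast_add_one_ne_zero _)

theorem algebraicIndependent_of_det_derivation_ne_zero [Fintype σ] [DecidableEq σ] {A : Type*}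
    [Field R] [CharZero R] [CommRing A] [IsDomain A] [Algebra R A]
    {x : σ → A} (D : σ → Derivation R A A) (hD : (Matrix.of fun i j => D j (x i)).det ≠ 0) :
    AlgebraicIndependent R x := by
  rw [algebraicIndependent_iff]
  suffices H : ∀ n (F : MvPolynomial σ R), F.totalDegree ≤ n → aeval x F = 0 → F = 0 from
    fun F => H _ F le_rfl
  have eq_zero_of_eq_C (F : MvPolynomial σ R) (hF : aeval x F = 0) (hC : F = C (coeff 0 F)) :
      F = 0 := by
    rw [hC, ← algebraMap_eq, AlgHom.commutes, FaithfulSMul.algebraMap_eq_zero_iff] at hF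
    rw [hC, hF, C_0]
  intro n
  induction n with
  | zero =>
    intro F hdeg hF
    exact eq_zero_of_eq_C F hF (totalDegree_eq_zero_iff_eq_C.mp (Nat.le_zero.mp hdeg))
  | succ n ih =>
    intro F hdeg hF
    have hvecMul : (fun i => aeval x (pderiv i F)) ᵥ* Matrix.of (fun i j => D j (x i)) = 0 := by
      funext j
      have := derivation_aeval (D j) x F
      rw [hF, map_zero] at this
      exact this.symm
    have hpderiv := congrFun (Matrix.eq_zero_of_vecMul_eq_zero hD hvecMul)
    refine eq_zero_of_eq_C F hF (eq_C_of_forall_pderiv_eq_zero fun i => ?_)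
    exact ih _ ((totalDegree_pderiv_le i F).trans (by omega)) (hpderiv i)

theorem eval_aeval_toMvPolynomial [Fintype σ] [CommSemiring R] (M : Matrix σ σ R) (v : σ → R)
    (P : MvPolynomial σ R) : eval v (aeval M.toMvPolynomial P) = eval (M *ᵥ v) P := by
  rw [aeval_eq_bind₁, ← coe_aeval_eq_eval, ← coe_aeval_eq_eval, RingHom.coe_coe, aeval_bind₁]
  simp [Matrix.toMvPolynomial_eval_eq_apply]

theorem homogeneousComponent_aeval_toMvPolynomial [Fintype σ] [CommSemiring R] (M : Matrix σ σ R)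
    (k : ℕ) (P : MvPolynomial σ R) :
    homogeneousComponent k (aeval M.toMvPolynomial P)
      = aeval M.toMvPolynomial (homogeneousComponent k P) := by
  have hhom (n : ℕ) : (aeval M.toMvPolynomial (homogeneousComponent n P)).IsHomogeneous n := by
    simpa using (homogeneousComponent_isHomogeneous n P).aeval _ M.toMvPolynomial_isHomogeneous
  conv_lhs => rw [← sum_homogeneousComponent P]
  simp only [map_sum, homogeneousComponent_of_mem (hhom _), Finset.sum_ite_eq, Finset.mem_range]
  split_ifs with hk
  · rfl
  · rw [homogeneousComponent_eq_zero k P (by omega), map_zero]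

end Polynomial

section DirectionalDerivative

variable {n : ℕ}

theorem dirDeriv_eq_mkDerivation (w : Fin n → ℂ) (P : MvPolynomial (Fin n) ℂ) :
    dirDeriv w P = mkDerivation ℂ (fun i => (C (w i) : MvPolynomial (Fin n) ℂ)) P := by
  have := derivation_aeval (mkDerivation ℂ fun i => (C (w i) : MvPolynomial (Fin n) ℂ)) X P
  simpa [dirDeriv, smul_eq_C_mul, mul_comm] using this.symm

theorem eval_dirDeriv_smul (c : ℂ) (q w : Fin n → ℂ) (P : MvPolynomial (Fin n) ℂ) :
    eval q (dirDeriv (c • w) P) = c * eval q (dirDeriv w P) := by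
  simp [dirDeriv, Finset.mul_sum, mul_assoc]

theorem dirDeriv_C_mul (c : ℂ) (w : Fin n → ℂ) (P : MvPolynomial (Fin n) ℂ) :
    dirDeriv w (C c * P) = C c * dirDeriv w P := by
  simp only [dirDeriv, pderiv_C_mul, Finset.mul_sum, mul_smul_comm]

theorem isHomogeneous_dirDeriv {d : ℕ} {P : MvPolynomial (Fin n) ℂ} (hP : P.IsHomogeneous d)
    (w : Fin n → ℂ) : (dirDeriv w P).IsHomogeneous (d - 1) :=
  IsHomogeneous.sum _ _ _ fun i _ =>
    (homogeneousSubmodule (Fin n) ℂ (d - 1)).smul_mem (w i) hP.pderiv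

theorem eval_dirDeriv_self {d : ℕ} {P : MvPolynomial (Fin n) ℂ} (hP : P.IsHomogeneous d)
    (q : Fin n → ℂ) : eval q (dirDeriv q P) = d * eval q P := by
  simpa [dirDeriv] using congrArg (eval q) hP.sum_X_mul_pderiv

theorem dirDeriv_aeval_toMvPolynomial (M : Matrix (Fin n) (Fin n) ℂ) (w : Fin n → ℂ)
    (P : MvPolynomial (Fin n) ℂ) :
    dirDeriv w (aeval M.toMvPolynomial P) = aeval M.toMvPolynomial (dirDeriv (M *ᵥ w) P) := by
  have hM (i : Fin n) :
      mkDerivation ℂ (fun j => (C (w j) : MvPolynomial (Fin n) ℂ)) (M.toMvPolynomial i)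
        = C ((M *ᵥ w) i) := by
    simp [Matrix.toMvPolynomial, ← C_mul_X_eq_monomial, Matrix.mulVec, dotProduct]
  rw [dirDeriv_eq_mkDerivation, derivation_aeval]
  simp only [hM, dirDeriv, map_sum, map_smul, smul_eq_mul, C_mul', mul_comm]

end DirectionalDerivative

section Invariants

variable {ι : Type*} [Fintype ι] {S : Set (Matrix ι ι ℂ)} {P Q : MvPolynomial ι ℂ}

theorem mem_matInvariantAlgebra_iff :
    P ∈ matInvariantAlgebra S ↔ ∀ M ∈ S, aeval M.toMvPolynomial P = P := by
  refine forall₂_congr fun M _ => ?_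
  simp only [MvPolynomial.funext_iff, eval_aeval_toMvPolynomial]

theorem matInvariantAlgebra_closure [DecidableEq ι] :
    matInvariantAlgebra (Submonoid.closure S : Set (Matrix ι ι ℂ)) = matInvariantAlgebra S := by
  refine le_antisymm (fun P hP M hM => hP M (Submonoid.subset_closure hM)) fun P hP M hM => ?_
  induction hM using Submonoid.closure_induction with
  | mem M hM => exact hP M hM
  | one => simp
  | mul M N _ _ hM hN => intro v; rw [← Matrix.mulVec_mulVec, hM, hN]

theorem homogeneousComponent_mem_matInvariantAlgebra (hP : P ∈ matInvariantAlgebra S) (k : ℕ) :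
    homogeneousComponent k P ∈ matInvariantAlgebra S := by
  rw [mem_matInvariantAlgebra_iff] at hP ⊢
  intro M hM
  rw [← homogeneousComponent_aeval_toMvPolynomial, hP M hM]

theorem mem_matInvariantAlgebra_of_mul_mem (hP₀ : P ≠ 0) (hP : P ∈ matInvariantAlgebra S)
    (hPQ : P * Q ∈ matInvariantAlgebra S) : Q ∈ matInvariantAlgebra S := by
  rw [mem_matInvariantAlgebra_iff] at hP hPQ ⊢
  intro M hM
  have := hPQ M hM
  rw [map_mul, hP M hM] at this
  exact mul_left_cancel₀ hP₀ this

theorem dvd_degree_of_eval_ne_zero {g : Matrix ι ι ℂ} {q : ι → ℂ} {ζ : ℂ} {d k : ℕ} (hg : g ∈ S)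
    (hζ : IsPrimitiveRoot ζ d) (hgq : g *ᵥ q = ζ • q) (hP : P ∈ matInvariantAlgebra S)
    (hk : P.IsHomogeneous k) (hPq : eval q P ≠ 0) : d ∣ k := by
  refine hζ.dvd_of_pow_eq_one k (mul_right_cancel₀ hPq ?_)
  rw [← eval_smul_of_isHomogeneous hk, ← hgq, hP g hg, one_mul]

theorem exists_eval_sub_smul_pow_eq_zero {g : Matrix ι ι ℂ} {q : ι → ℂ} {ζ : ℂ} {d k : ℕ}
    {t : MvPolynomial ι ℂ} (hg : g ∈ S) (hζ : IsPrimitiveRoot ζ d) (hgq : g *ᵥ q = ζ • q)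
    (ht_deg : t.IsHomogeneous d) (htq : eval q t ≠ 0)
    (hP : P ∈ matInvariantAlgebra S) (hk : P.IsHomogeneous k) :
    ∃ (c : ℂ) (m : ℕ), (P - c • t ^ m).IsHomogeneous k ∧ eval q (P - c • t ^ m) = 0 := by
  by_cases hPq : eval q P = 0
  · exact ⟨0, 0, by simpa using hk, by simpa using hPq⟩
  obtain ⟨m, rfl⟩ := dvd_degree_of_eval_ne_zero hg hζ hgq hP hk hPq
  refine ⟨eval q P / eval q t ^ m, m, hk.sub ?_, by simp [htq]⟩
  exact (homogeneousSubmodule ι ℂ (d * m)).smul_mem _ (ht_deg.pow m)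

/-- A multiple of a power of `t` corrects any homogeneous invariant to one vanishing at `q`;
dividing out `h` then lowers the degree. -/
theorem matInvariantAlgebra_le_adjoin_pair {g : Matrix ι ι ℂ} {q : ι → ℂ} {ζ : ℂ} {d e : ℕ}
    {t h : MvPolynomial ι ℂ} (hg : g ∈ S) (hζ : IsPrimitiveRoot ζ d) (hgq : g *ᵥ q = ζ • q)
    (ht : t ∈ matInvariantAlgebra S) (ht_deg : t.IsHomogeneous d) (htq : eval q t ≠ 0)
    (hh : h ∈ matInvariantAlgebra S) (hh_deg : h.IsHomogeneous e) (he : 0 < e) (hh₀ : h ≠ 0)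
    (hdvd : ∀ k P, P.IsHomogeneous k → P ∈ matInvariantAlgebra S → eval q P = 0 → h ∣ P) :
    matInvariantAlgebra S ≤ Algebra.adjoin ℂ {t, h} := by
  have htA : t ∈ Algebra.adjoin ℂ {t, h} := Algebra.subset_adjoin (by simp)
  have hhA : h ∈ Algebra.adjoin ℂ {t, h} := Algebra.subset_adjoin (by simp)
  suffices H : ∀ n (P : MvPolynomial ι ℂ), P.totalDegree < n → P ∈ matInvariantAlgebra S →
      P ∈ Algebra.adjoin ℂ {t, h} from fun P => H _ P (Nat.lt_succ_self _)
  intro n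
  induction n with
  | zero => intro P hn; omega
  | succ n ih =>
    intro P hn hP
    rw [← sum_homogeneousComponent P]
    refine sum_mem fun k hk => ?_
    rw [Finset.mem_range] at hk
    have hR := homogeneousComponent_mem_matInvariantAlgebra hP k
    obtain ⟨c, m, hR_deg, hRq⟩ := exists_eval_sub_smul_pow_eq_zero hg hζ hgq ht_deg htq hR
      (homogeneousComponent_isHomogeneous k P)
    have hR' := sub_mem hR (Subalgebra.smul_mem _ (pow_mem ht m) c)
    obtain ⟨Q, hQ⟩ := hdvd k _ hR_deg hR' hRq
    rw [hQ] at hR' hR_deg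
    have hQA : Q ∈ Algebra.adjoin ℂ {t, h} := by
      rcases eq_or_ne Q 0 with rfl | hQ₀
      · exact zero_mem _
      have hdeg := totalDegree_mul_of_isDomain hh₀ hQ₀
      rw [hR_deg.totalDegree (mul_ne_zero hh₀ hQ₀), hh_deg.totalDegree hh₀] at hdeg
      exact ih Q (by omega) (mem_matInvariantAlgebra_of_mul_mem hh₀ hh hR')
    rw [sub_eq_iff_eq_add.mp hQ]
    exact add_mem (mul_mem hhA hQA) (Subalgebra.smul_mem _ (pow_mem htA m) c)

end Invariants

section Compatible

variable {n : ℕ} {S : Set (Matrix (Fin n) (Fin n) ℂ)} {g : Matrix (Fin n) (Fin n) ℂ}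

theorem eval_mulVec_dirDeriv_mulVec {P : MvPolynomial (Fin n) ℂ} (hP : P ∈ matInvariantAlgebra S)
    (hg : g ∈ S) (q w : Fin n → ℂ) :
    eval (g *ᵥ q) (dirDeriv (g *ᵥ w) P) = eval q (dirDeriv w P) := by
  rw [← eval_aeval_toMvPolynomial, ← dirDeriv_aeval_toMvPolynomial,
    mem_matInvariantAlgebra_iff.mp hP g hg]

theorem eval_dirDeriv_eq_zero_of_eigenvectors {P : MvPolynomial (Fin n) ℂ} {d : ℕ}
    {q w : Fin n → ℂ} {ζ μ : ℂ} (hP : P ∈ matInvariantAlgebra S) (hd : P.IsHomogeneous d)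
    (hg : g ∈ S) (hq : g *ᵥ q = ζ • q) (hw : g *ᵥ w = μ • w) (hμ : ζ ^ (d - 1) * μ ≠ 1) :
    eval q (dirDeriv w P) = 0 := by
  have hinv := eval_mulVec_dirDeriv_mulVec hP hg q w
  rw [hq, hw, eval_smul_of_isHomogeneous (isHomogeneous_dirDeriv hd _), eval_dirDeriv_smul,
    ← mul_assoc] at hinv
  exact (mul_left_eq_self₀.mp hinv).resolve_left hμ

variable {b : Fin n → Fin n → ℂ} {q : Fin n → ℂ} {x : Fin n → MvPolynomial (Fin n) ℂ}

theorem IsCompatible.algebraicIndependent (hx : IsCompatible b q x) : AlgebraicIndependent ℂ x := by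
  refine algebraicIndependent_of_det_derivation_ne_zero
    (fun β => mkDerivation ℂ fun i => C (b β i)) fun hdet => ?_
  have hJ : (eval q).mapMatrix (Matrix.of fun α β => mkDerivation ℂ (fun i => C (b β i)) (x α))
      = 1 := by
    ext α β
    simp [← dirDeriv_eq_mkDerivation, hx α β, Matrix.one_apply]
  have := congrArg (eval q) hdet
  rw [RingHom.map_det, hJ, Matrix.det_one, map_zero] at this
  exact one_ne_zero this

theorem IsCompatible.eq_one_of_mulVec_eq_self (hx : IsCompatible b q x)
    (hinv : ∀ α, x α ∈ matInvariantAlgebra S) (hg : g ∈ S) (hq : g *ᵥ q = q) : g = 1 := by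
  let J : Matrix (Fin n) (Fin n) ℂ := Matrix.of fun α i => eval q (pderiv i (x α))
  have hJ (w : Fin n → ℂ) : J *ᵥ w = fun α => eval q (dirDeriv w (x α)) := by
    funext α
    simp [J, Matrix.mulVec, dotProduct, dirDeriv, mul_comm]
  have hJb : J * (Matrix.of b)ᵀ = 1 := by
    ext α β
    rw [Matrix.one_apply, ← hx α β]
    exact congrFun (hJ (b β)) α
  have hJg : J * g = J := by
    refine Matrix.ext_of_mulVec_single fun i => ?_
    rw [← Matrix.mulVec_mulVec, hJ, hJ]
    funext α
    conv_lhs => rw [← hq]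
    exact eval_mulVec_dirDeriv_mulVec (hinv α) hg q _
  have hbJ : (Matrix.of b)ᵀ * J = 1 := mul_eq_one_comm.mp hJb
  calc g = (Matrix.of b)ᵀ * J * g := by rw [hbJ, one_mul]
    _ = 1 := by rw [mul_assoc, hJg, hbJ]

end Compatible

namespace G₈

/-- The order-four generator `r₄` of `G₈` fixing the first coordinate vector. -/
def r₄ : Matrix (Fin 2) (Fin 2) ℂ := !![1, 0; 0, Complex.I]

/-- The second order-four generator `r₄'` of `G₈`. -/
def r₄' : Matrix (Fin 2) (Fin 2) ℂ :=
  (1 / 2 : ℂ) • !![1 + Complex.I, -1 + Complex.I; -1 + Complex.I, 1 + Complex.I]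

end G₈

/-- The reflection group `G₈`, as a submonoid of the matrix monoid: its generators have finite
order, so the group they generate is the monoid they generate. -/
def G₈ : Submonoid (Matrix (Fin 2) (Fin 2) ℂ) := Submonoid.closure {G₈.r₄, G₈.r₄'}

namespace G₈

/-- The primitive twelfth root of unity `e^{πi/6}`, the regular eigenvalue of `r₄ r₄'`. -/
def ζ : ℂ := Complex.exp (Real.pi * Complex.I / 6)

/-- The regular eigenvector of `r₄ r₄'` for the eigenvalue `ζ`. -/
def q₁ : Fin 2 → ℂ :=
  (1 / (Real.sqrt (6 + 2 * Real.sqrt 3) : ℂ)) • ![1 + (Real.sqrt 3 : ℂ), -1 - Complex.I]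

/-- The eigenvector of `r₄ r₄'` for the eigenvalue `ζ ^ 5`. -/
def q₂ : Fin 2 → ℂ :=
  (1 / (Real.sqrt (6 - 2 * Real.sqrt 3) : ℂ)) • ![(Real.sqrt 3 : ℂ) - 1, 1 + Complex.I]

/-- Klein's edge form of the octahedron, the invariant of degree `12`. -/
def tO : MvPolynomial (Fin 2) ℂ :=
  X 0 ^ 12 - 33 * X 0 ^ 8 * X 1 ^ 4 - 33 * X 0 ^ 4 * X 1 ^ 8 + X 1 ^ 12

/-- Klein's face form of the octahedron, the invariant of degree `8`. -/
def hO : MvPolynomial (Fin 2) ℂ := X 0 ^ 8 + 14 * X 0 ^ 4 * X 1 ^ 4 + X 1 ^ 8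

/-- The basic invariants `(x₁, x₂)`, scaled so as to be compatible at `q₁`. -/
def basicInv : Fin 2 → MvPolynomial (Fin 2) ℂ :=
  ![C ((Real.sqrt 3 : ℂ) / 16) * tO, C (3 / (8 * (Real.sqrt 2 : ℂ))) * hO]

theorem sqrt_three_sq : (Real.sqrt 3 : ℂ) ^ 2 = 3 := by
  exact_mod_cast Real.sq_sqrt (show (0 : ℝ) ≤ 3 by norm_num)

theorem sqrt_two_sq : (Real.sqrt 2 : ℂ) ^ 2 = 2 := by
  exact_mod_cast Real.sq_sqrt (show (0 : ℝ) ≤ 2 by norm_num)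

theorem two_mul_sqrt_three_lt_six : 2 * Real.sqrt 3 < 6 := by
  have : Real.sqrt 3 < 3 := by rw [Real.sqrt_lt' (by norm_num)]; norm_num
  linarith

theorem norm_q₁_sq : (Real.sqrt (6 + 2 * Real.sqrt 3) : ℂ) ^ 2 = 6 + 2 * Real.sqrt 3 := by
  exact_mod_cast Real.sq_sqrt (show 0 ≤ 6 + 2 * Real.sqrt 3 by positivity)

theorem norm_q₁_ne_zero : (Real.sqrt (6 + 2 * Real.sqrt 3) : ℂ) ≠ 0 := by
  exact_mod_cast (show 0 < Real.sqrt (6 + 2 * Real.sqrt 3) by positivity).ne'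

theorem norm_q₂_ne_zero : (Real.sqrt (6 - 2 * Real.sqrt 3) : ℂ) ≠ 0 := by
  exact_mod_cast (Real.sqrt_pos.mpr (sub_pos.mpr two_mul_sqrt_three_lt_six)).ne'

theorem norm_q₁_mul_norm_q₂ :
    (Real.sqrt (6 + 2 * Real.sqrt 3) : ℂ) * Real.sqrt (6 - 2 * Real.sqrt 3)
      = 2 * Real.sqrt 2 * Real.sqrt 3 := by
  have h₂ : Real.sqrt 2 ^ 2 = 2 := Real.sq_sqrt (by norm_num)
  have h₃ : Real.sqrt 3 ^ 2 = 3 := Real.sq_sqrt (by norm_num)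
  have h : Real.sqrt (6 + 2 * Real.sqrt 3) * Real.sqrt (6 - 2 * Real.sqrt 3)
      = 2 * Real.sqrt 2 * Real.sqrt 3 := by
    rw [← Real.sqrt_mul (by positivity), Real.sqrt_eq_iff_mul_self_eq_of_pos (by positivity)]
    linear_combination 4 * Real.sqrt 3 ^ 2 * h₂ + 12 * h₃
  exact_mod_cast h

theorem isPrimitiveRoot_ζ : IsPrimitiveRoot ζ 12 := by
  have h : (Real.pi * Complex.I / 6 : ℂ) = 2 * Real.pi * Complex.I / (12 : ℕ) := by
    push_cast
    ring
  rw [ζ, h]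
  exact Complex.isPrimitiveRoot_exp 12 (by norm_num)

theorem ζ_eq : ζ = (Real.sqrt 3 + Complex.I) / 2 := by
  rw [ζ, mul_div_right_comm, Complex.exp_mul_I,
    show (Real.pi / 6 : ℂ) = ((Real.pi / 6 : ℝ) : ℂ) by push_cast; rfl, ← Complex.ofReal_cos,
    ← Complex.ofReal_sin, Real.cos_pi_div_six, Real.sin_pi_div_six]
  push_cast
  ring

theorem r₄_mulVec_zero (v : Fin 2 → ℂ) : (r₄ *ᵥ v) 0 = v 0 := by
  simp [r₄, Matrix.mulVec, dotProduct]

theorem r₄_mulVec_one (v : Fin 2 → ℂ) : (r₄ *ᵥ v) 1 = Complex.I * v 1 := by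
  simp [r₄, Matrix.mulVec, dotProduct]

theorem r₄'_mulVec_zero (v : Fin 2 → ℂ) :
    (r₄' *ᵥ v) 0 = (1 + Complex.I) / 2 * (v 0 + Complex.I * v 1) := by
  simp only [r₄', Matrix.mulVec, dotProduct, Fin.sum_univ_two, Matrix.smul_apply, Matrix.of_apply,
    Matrix.cons_val_zero, Matrix.cons_val_one, smul_eq_mul]
  grind [Complex.I_sq]

theorem r₄'_mulVec_one (v : Fin 2 → ℂ) :
    (r₄' *ᵥ v) 1 = (1 + Complex.I) / 2 * (Complex.I * v 0 + v 1) := by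
  simp only [r₄', Matrix.mulVec, dotProduct, Fin.sum_univ_two, Matrix.smul_apply, Matrix.of_apply,
    Matrix.cons_val_zero, Matrix.cons_val_one, smul_eq_mul]
  grind [Complex.I_sq]

theorem q₁_zero : q₁ 0 = 1 / Real.sqrt (6 + 2 * Real.sqrt 3) * (1 + Real.sqrt 3) := rfl

theorem q₁_one : q₁ 1 = 1 / Real.sqrt (6 + 2 * Real.sqrt 3) * (-1 - Complex.I) := rfl

theorem q₂_zero : q₂ 0 = 1 / Real.sqrt (6 - 2 * Real.sqrt 3) * (Real.sqrt 3 - 1) := rfl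

theorem q₂_one : q₂ 1 = 1 / Real.sqrt (6 - 2 * Real.sqrt 3) * (1 + Complex.I) := rfl

theorem mulVec_q₁ : (r₄ * r₄') *ᵥ q₁ = ζ • q₁ := by
  rw [← Matrix.mulVec_mulVec]
  refine funext (Fin.forall_fin_two.mpr ⟨?_, ?_⟩)
  · rw [r₄_mulVec_zero, r₄'_mulVec_zero, Pi.smul_apply, smul_eq_mul, ζ_eq, q₁_zero, q₁_one]
    grind [sqrt_three_sq, Complex.I_sq]
  · rw [r₄_mulVec_one, r₄'_mulVec_one, Pi.smul_apply, smul_eq_mul, ζ_eq, q₁_zero, q₁_one]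
    grind [sqrt_three_sq, Complex.I_sq]

theorem mulVec_q₂ : (r₄ * r₄') *ᵥ q₂ = ζ ^ 5 • q₂ := by
  rw [← Matrix.mulVec_mulVec]
  refine funext (Fin.forall_fin_two.mpr ⟨?_, ?_⟩)
  · rw [r₄_mulVec_zero, r₄'_mulVec_zero, Pi.smul_apply, smul_eq_mul, ζ_eq, q₂_zero, q₂_one]
    grind [sqrt_three_sq, Complex.I_sq]
  · rw [r₄_mulVec_one, r₄'_mulVec_one, Pi.smul_apply, smul_eq_mul, ζ_eq, q₂_zero, q₂_one]
    grind [sqrt_three_sq, Complex.I_sq]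

theorem r₄_mem : r₄ ∈ G₈ := Submonoid.subset_closure (by simp)

theorem r₄'_mem : r₄' ∈ G₈ := Submonoid.subset_closure (by simp)

theorem r₄_mul_r₄'_mem : r₄ * r₄' ∈ G₈ := mul_mem r₄_mem r₄'_mem

theorem eval_tO (v : Fin 2 → ℂ) :
    eval v tO = (v 0 ^ 4) ^ 3 - 33 * (v 0 ^ 4) ^ 2 * v 1 ^ 4 - 33 * v 0 ^ 4 * (v 1 ^ 4) ^ 2
      + (v 1 ^ 4) ^ 3 := by
  simp [tO, ← pow_mul]

theorem eval_hO (v : Fin 2 → ℂ) :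
    eval v hO = (v 0 ^ 4) ^ 2 + 14 * v 0 ^ 4 * v 1 ^ 4 + (v 1 ^ 4) ^ 2 := by
  simp [hO, ← pow_mul]

theorem r₄'_mulVec_zero_pow_four (v : Fin 2 → ℂ) : (r₄' *ᵥ v) 0 ^ 4 =
    -(v 0 ^ 4 - 6 * v 0 ^ 2 * v 1 ^ 2 + v 1 ^ 4
      + Complex.I * (4 * v 0 ^ 3 * v 1 - 4 * v 0 * v 1 ^ 3)) / 4 := by
  rw [r₄'_mulVec_zero]
  grind [Complex.I_sq]

theorem r₄'_mulVec_one_pow_four (v : Fin 2 → ℂ) : (r₄' *ᵥ v) 1 ^ 4 =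
    -(v 0 ^ 4 - 6 * v 0 ^ 2 * v 1 ^ 2 + v 1 ^ 4
      - Complex.I * (4 * v 0 ^ 3 * v 1 - 4 * v 0 * v 1 ^ 3)) / 4 := by
  rw [r₄'_mulVec_one]
  grind [Complex.I_sq]

theorem tO_mem : tO ∈ matInvariantAlgebra (G₈ : Set (Matrix (Fin 2) (Fin 2) ℂ)) := by
  rw [G₈, matInvariantAlgebra_closure]
  rintro _ (rfl | rfl) v
  · rw [eval_tO, eval_tO, r₄_mulVec_zero, r₄_mulVec_one, mul_pow, Complex.I_pow_four, one_mul]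
  · rw [eval_tO, eval_tO, r₄'_mulVec_zero_pow_four, r₄'_mulVec_one_pow_four]
    grind [Complex.I_sq]

theorem hO_mem : hO ∈ matInvariantAlgebra (G₈ : Set (Matrix (Fin 2) (Fin 2) ℂ)) := by
  rw [G₈, matInvariantAlgebra_closure]
  rintro _ (rfl | rfl) v
  · rw [eval_hO, eval_hO, r₄_mulVec_zero, r₄_mulVec_one, mul_pow, Complex.I_pow_four, one_mul]
  · rw [eval_hO, eval_hO, r₄'_mulVec_zero_pow_four, r₄'_mulVec_one_pow_four]
    grind [Complex.I_sq]

theorem q₁_zero_sq : q₁ 0 ^ 2 = (3 + Real.sqrt 3) / 6 := by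
  rw [q₁_zero]
  grind [sqrt_three_sq, norm_q₁_sq, norm_q₁_ne_zero]

theorem q₁_one_sq : q₁ 1 ^ 2 = Complex.I * (3 - Real.sqrt 3) / 6 := by
  rw [q₁_one]
  grind [sqrt_three_sq, norm_q₁_sq, norm_q₁_ne_zero, Complex.I_sq]

theorem q₁_zero_pow_four : q₁ 0 ^ 4 = (2 + Real.sqrt 3) / 6 := by
  grind [q₁_zero_sq, sqrt_three_sq]

theorem q₁_one_pow_four : q₁ 1 ^ 4 = -(2 - Real.sqrt 3) / 6 := by
  grind [q₁_one_sq, sqrt_three_sq, Complex.I_sq]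

theorem q₁_zero_ne_zero : q₁ 0 ≠ 0 := by
  intro h
  have h₀ := q₁_zero_pow_four
  grind [sqrt_three_sq]

theorem q₁_one_ne_zero : q₁ 1 ≠ 0 := by
  intro h
  have h₁ := q₁_one_pow_four
  grind [sqrt_three_sq]

theorem q₁_zero_mul_q₂_zero : q₁ 0 * q₂ 0 = Real.sqrt 2 * Real.sqrt 3 / 6 := by
  rw [q₁_zero, q₂_zero]
  grind [sqrt_two_sq, sqrt_three_sq, norm_q₁_mul_norm_q₂, norm_q₁_ne_zero, norm_q₂_ne_zero]

theorem q₁_one_mul_q₂_one :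
    q₁ 1 * q₂ 1 = -(Complex.I * (Real.sqrt 2 * Real.sqrt 3 / 6)) := by
  rw [q₁_one, q₂_one]
  grind [sqrt_two_sq, sqrt_three_sq, norm_q₁_mul_norm_q₂, norm_q₁_ne_zero, norm_q₂_ne_zero,
    Complex.I_sq]

theorem eval_q₁_tO : eval q₁ tO = 4 * Real.sqrt 3 / 9 := by
  rw [eval_tO, q₁_zero_pow_four, q₁_one_pow_four]
  grind [sqrt_three_sq]

theorem pderiv_zero_hO : pderiv 0 hO = 8 * X 0 ^ 3 * (X 0 ^ 4 + 7 * X 1 ^ 4) := by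
  have h14 : pderiv 0 (14 : MvPolynomial (Fin 2) ℂ) = 0 :=
    (pderiv _).map_natCast 14
  simp only [hO, map_add, Derivation.leibniz, Derivation.leibniz_pow, pderiv_X_self,
    pderiv_X_of_ne one_ne_zero, h14, smul_eq_mul, nsmul_eq_mul, Nat.cast_ofNat]
  ring

theorem pderiv_one_hO : pderiv 1 hO = 8 * X 1 ^ 3 * (7 * X 0 ^ 4 + X 1 ^ 4) := by
  have h14 : pderiv 1 (14 : MvPolynomial (Fin 2) ℂ) = 0 :=
    (pderiv _).map_natCast 14
  simp only [hO, map_add, Derivation.leibniz, Derivation.leibniz_pow, pderiv_X_self,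
    pderiv_X_of_ne zero_ne_one, h14, smul_eq_mul, nsmul_eq_mul, Nat.cast_ofNat]
  ring

theorem eval_q₁_dirDeriv_q₂_hO : eval q₁ (dirDeriv q₂ hO) = 8 * Real.sqrt 2 / 3 := by
  have h : eval q₁ (dirDeriv q₂ hO) =
      8 * (q₁ 0 * q₂ 0 * q₁ 0 ^ 2 * (q₁ 0 ^ 4 + 7 * q₁ 1 ^ 4)
        + q₁ 1 * q₂ 1 * q₁ 1 ^ 2 * (7 * q₁ 0 ^ 4 + q₁ 1 ^ 4)) := by
    simp only [dirDeriv, Fin.sum_univ_two, pderiv_zero_hO, pderiv_one_hO, map_add, map_mul,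
      map_pow, smul_eval, eval_X, map_ofNat]
    ring
  rw [h, q₁_zero_mul_q₂_zero, q₁_one_mul_q₂_one, q₁_zero_pow_four, q₁_one_pow_four, q₁_zero_sq,
    q₁_one_sq]
  grind [sqrt_three_sq, Complex.I_sq]

theorem squarefree_hO : Squarefree hO := by
  refine squarefree_of_isRelPrime_pderiv (i := 0) (j := 1) fun d h₀ h₁ => ?_
  have hC : (C (1 / 384) : MvPolynomial (Fin 2) ℂ) * 384 = 1 := by
    rw [← map_ofNat C, ← C_mul]
    norm_num
  rw [pderiv_zero_hO] at h₀
  rw [pderiv_one_hO] at h₁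
  have hX₀ : d ∣ X 0 ^ 11 := by
    have := (h₀.mul_left (48 * X 0 ^ 4 + 7 * X 1 ^ 4)).sub (h₁.mul_left (49 * X 0 ^ 3 * X 1))
    convert this.mul_left (C (1 / 384)) using 1
    linear_combination (-X 0 ^ 11) * hC
  have hX₁ : d ∣ X 1 ^ 11 := by
    have := (h₁.mul_left (48 * X 1 ^ 4 + 7 * X 0 ^ 4)).sub (h₀.mul_left (49 * X 1 ^ 3 * X 0))
    convert this.mul_left (C (1 / 384)) using 1
    linear_combination (-X 1 ^ 11) * hC
  have hX : IsRelPrime (X 0 : MvPolynomial (Fin 2) ℂ) (X 1) := by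
    rw [(X_prime (i := 0)).irreducible.isRelPrime_iff_not_dvd, X_dvd_X]
    simp
  exact hX.pow hX₀ hX₁

theorem r₄_pow_mulVec_zero (k : ℕ) (v : Fin 2 → ℂ) : (r₄ ^ k *ᵥ v) 0 = v 0 := by
  induction k with
  | zero => simp
  | succ k ih => rw [pow_succ', ← Matrix.mulVec_mulVec, r₄_mulVec_zero, ih]

theorem r₄_pow_mulVec_one (k : ℕ) (v : Fin 2 → ℂ) : (r₄ ^ k *ᵥ v) 1 = Complex.I ^ k * v 1 := by
  induction k with
  | zero => simp
  | succ k ih => rw [pow_succ', ← Matrix.mulVec_mulVec, r₄_mulVec_one, ih, pow_succ', mul_assoc]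

theorem exists_eq_smul_r₄_pow_mulVec {v w : Fin 2 → ℂ} (hw₀ : w 0 ≠ 0) (hw₁ : w 1 ≠ 0)
    (h : v 0 ^ 4 * w 1 ^ 4 = w 0 ^ 4 * v 1 ^ 4) : ∃ (c : ℂ) (k : ℕ), v = c • r₄ ^ k *ᵥ w := by
  rcases eq_or_ne (v 0) 0 with hv₀ | hv₀
  · have hv₁ : v 1 = 0 := by simpa [hv₀, hw₀] using h.symm
    exact ⟨0, 0, by ext i; fin_cases i <;> simp [hv₀, hv₁]⟩
  have hpow : (v 1 * w 0 / (v 0 * w 1)) ^ 4 = 1 := by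
    rw [div_pow, mul_pow, mul_pow, h, mul_comm, div_self]
    rw [← h]
    positivity
  obtain ⟨k, -, hk⟩ := Complex.isPrimitiveRoot_I.eq_pow_of_pow_eq_one hpow
  refine ⟨v 0 / w 0, k, funext (Fin.forall_fin_two.mpr ⟨?_, ?_⟩)⟩
  · rw [Pi.smul_apply, r₄_pow_mulVec_zero, smul_eq_mul, div_mul_cancel₀ _ hw₀]
  · rw [Pi.smul_apply, r₄_pow_mulVec_one, hk, smul_eq_mul]
    field_simp

theorem r₄'_sq_mulVec_zero (v : Fin 2 → ℂ) : (r₄' ^ 2 *ᵥ v) 0 = -v 1 := by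
  rw [sq, ← Matrix.mulVec_mulVec, r₄'_mulVec_zero, r₄'_mulVec_zero, r₄'_mulVec_one]
  grind [Complex.I_sq]

theorem r₄'_sq_mulVec_one (v : Fin 2 → ℂ) : (r₄' ^ 2 *ᵥ v) 1 = -v 0 := by
  rw [sq, ← Matrix.mulVec_mulVec, r₄'_mulVec_one, r₄'_mulVec_zero, r₄'_mulVec_one]
  grind [Complex.I_sq]

theorem exists_eq_smul_mulVec_q₁_of_eval_hO_eq_zero {v : Fin 2 → ℂ} (hv : eval v hO = 0) :
    ∃ M ∈ G₈, ∃ c : ℂ, v = c • M *ᵥ q₁ := by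
  have hfactor : (v 0 ^ 4 + (7 + 4 * Real.sqrt 3) * v 1 ^ 4)
      * (v 0 ^ 4 + (7 - 4 * Real.sqrt 3) * v 1 ^ 4) = 0 := by
    rw [eval_hO] at hv
    linear_combination hv - 16 * v 1 ^ 8 * sqrt_three_sq
  rcases mul_eq_zero.mp hfactor with h | h
  · obtain ⟨c, k, hck⟩ := exists_eq_smul_r₄_pow_mulVec (v := v) q₁_zero_ne_zero q₁_one_ne_zero (by
      rw [q₁_zero_pow_four, q₁_one_pow_four]
      grind [sqrt_three_sq])
    exact ⟨r₄ ^ k, pow_mem r₄_mem k, c, hck⟩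
  · obtain ⟨c, k, hck⟩ := exists_eq_smul_r₄_pow_mulVec (v := v) (w := r₄' ^ 2 *ᵥ q₁)
      (by simpa [r₄'_sq_mulVec_zero] using q₁_one_ne_zero)
      (by simpa [r₄'_sq_mulVec_one] using q₁_zero_ne_zero) (by
      rw [r₄'_sq_mulVec_zero, r₄'_sq_mulVec_one, Even.neg_pow (by decide), Even.neg_pow (by decide),
        q₁_zero_pow_four, q₁_one_pow_four]
      grind [sqrt_three_sq])
    refine ⟨r₄ ^ k * r₄' ^ 2, mul_mem (pow_mem r₄_mem k) (pow_mem r₄'_mem 2), c, ?_⟩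
    rw [hck, Matrix.mulVec_mulVec]

theorem hO_dvd_of_eval_q₁_eq_zero {k : ℕ} {P : MvPolynomial (Fin 2) ℂ} (hk : P.IsHomogeneous k)
    (hP : P ∈ matInvariantAlgebra (G₈ : Set (Matrix (Fin 2) (Fin 2) ℂ))) (hq : eval q₁ P = 0) :
    hO ∣ P := by
  refine dvd_of_squarefree_of_forall_eval_eq_zero squarefree_hO fun v hv => ?_
  obtain ⟨M, hM, c, rfl⟩ := exists_eq_smul_mulVec_q₁_of_eval_hO_eq_zero hv
  rw [eval_smul_of_isHomogeneous hk, hP M hM, hq, mul_zero]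

theorem isHomogeneous_tO : tO.IsHomogeneous 12 := by
  rw [tO, ← map_ofNat C 33]
  have hX (i : Fin 2) (n : ℕ) := isHomogeneous_X_pow (R := ℂ) i n
  exact (((hX 0 12).sub (((hX 0 8).C_mul 33).mul (hX 1 4))).sub
    (((hX 0 4).C_mul 33).mul (hX 1 8))).add (hX 1 12)

theorem isHomogeneous_hO : hO.IsHomogeneous 8 := by
  rw [hO, ← map_ofNat C 14]
  have hX (i : Fin 2) (n : ℕ) := isHomogeneous_X_pow (R := ℂ) i n
  exact ((hX 0 8).add (((hX 0 4).C_mul 14).mul (hX 1 4))).add (hX 1 8)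

theorem isHomogeneous_basicInv : ∀ α, (basicInv α).IsHomogeneous (![12, 8] α) :=
  Fin.forall_fin_two.mpr ⟨isHomogeneous_tO.C_mul _, isHomogeneous_hO.C_mul _⟩

theorem basicInv_mem :
    ∀ α, basicInv α ∈ matInvariantAlgebra (G₈ : Set (Matrix (Fin 2) (Fin 2) ℂ)) :=
  Fin.forall_fin_two.mpr ⟨mul_mem (Subalgebra.algebraMap_mem _ _) tO_mem,
    mul_mem (Subalgebra.algebraMap_mem _ _) hO_mem⟩

theorem eval_q₁_basicInv_zero : eval q₁ (basicInv 0) = 1 / 12 := by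
  simp only [basicInv, Matrix.cons_val_zero, map_mul, eval_C, eval_q₁_tO]
  grind [sqrt_three_sq]

theorem eval_q₁_dirDeriv_q₂_basicInv_one : eval q₁ (dirDeriv q₂ (basicInv 1)) = 1 := by
  have hsqrt : (Real.sqrt 2 : ℂ) ≠ 0 := by simp
  rw [basicInv, Matrix.cons_val_one, Matrix.cons_val_zero, dirDeriv_C_mul, map_mul, eval_C,
    eval_q₁_dirDeriv_q₂_hO]
  field_simp

theorem isCompatible_basicInv : IsCompatible ![q₁, q₂] q₁ basicInv := by
  have hg : r₄ * r₄' ∈ (G₈ : Set (Matrix (Fin 2) (Fin 2) ℂ)) := r₄_mul_r₄'_mem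
  have hζ (k : ℕ) (hk : ¬ 12 ∣ k) : ζ ^ k ≠ 1 := mt (isPrimitiveRoot_ζ.dvd_of_pow_eq_one k) hk
  have h₀₀ : eval q₁ (dirDeriv q₁ (basicInv 0)) = 1 := by
    rw [eval_dirDeriv_self (isHomogeneous_basicInv 0), eval_q₁_basicInv_zero]
    norm_num
  have h₀₁ : eval q₁ (dirDeriv q₂ (basicInv 0)) = 0 :=
    eval_dirDeriv_eq_zero_of_eigenvectors (basicInv_mem 0) (isHomogeneous_basicInv 0) hg mulVec_q₁
      mulVec_q₂ (by rw [← pow_add]; exact hζ 16 (by decide))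
  have h₁₀ : eval q₁ (dirDeriv q₁ (basicInv 1)) = 0 :=
    eval_dirDeriv_eq_zero_of_eigenvectors (basicInv_mem 1) (isHomogeneous_basicInv 1) hg mulVec_q₁
      mulVec_q₁ (by rw [← pow_succ]; exact hζ 8 (by decide))
  intro α β
  fin_cases α <;> fin_cases β
  exacts [h₀₀, h₀₁, h₁₀, eval_q₁_dirDeriv_q₂_basicInv_one]

theorem matInvariantAlgebra_le_adjoin_basicInv :
    matInvariantAlgebra (G₈ : Set (Matrix (Fin 2) (Fin 2) ℂ))
      ≤ Algebra.adjoin ℂ (Set.range basicInv) := by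
  have hunit : IsUnit (C (3 / (8 * (Real.sqrt 2 : ℂ))) : MvPolynomial (Fin 2) ℂ) := by
    simp
  have hne : basicInv 1 ≠ 0 := mul_ne_zero hunit.ne_zero squarefree_hO.ne_zero
  have hrange : Set.range basicInv = {basicInv 0, basicInv 1} := by
    ext
    simp [eq_comm]
  rw [hrange]
  refine matInvariantAlgebra_le_adjoin_pair (q := q₁) r₄_mul_r₄'_mem isPrimitiveRoot_ζ mulVec_q₁
    (basicInv_mem 0) (isHomogeneous_basicInv 0) (by rw [eval_q₁_basicInv_zero]; norm_num)
    (basicInv_mem 1) (isHomogeneous_basicInv 1) (by norm_num) hne fun k P hk hP hq => ?_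
  exact hunit.mul_left_dvd.mpr (hO_dvd_of_eval_q₁_eq_zero hk hP hq)

theorem isBasicInvariantsMat_basicInv :
    IsBasicInvariantsMat (G₈ : Set (Matrix (Fin 2) (Fin 2) ℂ)) ![12, 8] basicInv where
  homog := isHomogeneous_basicInv
  invariant := basicInv_mem
  indep := isCompatible_basicInv.algebraicIndependent
  gen := le_antisymm (Algebra.adjoin_le (Set.range_subset_iff.mpr basicInv_mem))
    matInvariantAlgebra_le_adjoin_basicInv

/-- Vacuous: neither `12` nor `8` is a sum of at least two of the degrees `12`, `8`. -/
theorem isGood_basicInv : IsGood ![12, 8] ![q₁, q₂] q₁ basicInv := by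
  intro α a hdeg hsum
  have hα : ![12, 8] α = 12 ∨ ![12, 8] α = 8 := by fin_cases α <;> simp
  simp only [Fin.sum_univ_two, Matrix.cons_val_zero, Matrix.cons_val_one] at hdeg hsum
  omega

theorem q₁_regular {M : Matrix (Fin 2) (Fin 2) ℂ} (hM : M ∈ G₈) (hrefl : IsReflection M) :
    M *ᵥ q₁ ≠ q₁ := fun hq =>
  hrefl.1 (isCompatible_basicInv.eq_one_of_mulVec_eq_self basicInv_mem hM hq)

end G₈

/-- For `G₈ = ⟨r₄, r₄'⟩` with `g = r₄ r₄'` and `ζ = e^{πi/6}`: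
`g` has eigenvalues `ζ, ζ^5` with the explicit eigenvectors `q₁, q₂`; `q₁` is a regular
vector; `(g, ζ, q₁)` is an admissible triplet of `G₈`; and, with `z` the
`(g,ζ)`-graded coordinate system dual to `(q₁, q₂)`, the polynomials
`x₁ = (√3/16) t_O` and `x₂ = (3/(8√2)) h_O` form a set of basic invariants of `G₈`
(of degrees `12` and `8`) which is good with respect to `(g, ζ, q₁)` and compatible
with `z` at `q₁`. -/
theorem statement_19 (ζ : ℂ) (hζ : ζ = Complex.exp (Real.pi * Complex.I / 6))
    (r₄ r₄' : Matrix (Fin 2) (Fin 2) ℂ)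
    (hr₄ : r₄ = !![1, 0; 0, Complex.I])
    (hr₄' : r₄' = (1 / 2 : ℂ) • !![1 + Complex.I, -1 + Complex.I;
      -1 + Complex.I, 1 + Complex.I])
    (G8 : Submonoid (Matrix (Fin 2) (Fin 2) ℂ))
    (hG8 : G8 = Submonoid.closure {r₄, r₄'})
    (g : Matrix (Fin 2) (Fin 2) ℂ) (hg : g = r₄ * r₄')
    (q₁ q₂ : Fin 2 → ℂ)
    (hq₁ : q₁ = (1 / (Real.sqrt (6 + 2 * Real.sqrt 3) : ℂ)) •
      ![1 + (Real.sqrt 3 : ℂ), -1 - Complex.I])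
    (hq₂ : q₂ = (1 / (Real.sqrt (6 - 2 * Real.sqrt 3) : ℂ)) •
      ![(Real.sqrt 3 : ℂ) - 1, 1 + Complex.I])
    (tO hO : MvPolynomial (Fin 2) ℂ)
    (htO : tO = X 0 ^ 12 - 33 * X 0 ^ 8 * X 1 ^ 4 - 33 * X 0 ^ 4 * X 1 ^ 8 + X 1 ^ 12)
    (hhO : hO = X 0 ^ 8 + 14 * X 0 ^ 4 * X 1 ^ 4 + X 1 ^ 8)
    (x : Fin 2 → MvPolynomial (Fin 2) ℂ)
    (hx1 : x 0 = C ((Real.sqrt 3 : ℂ) / 16) * tO)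
    (hx2 : x 1 = C (3 / (8 * (Real.sqrt 2 : ℂ))) * hO) :
    -- `ζ` is a primitive `12`-th root of unity and `g ∈ G₈`
    IsPrimitiveRoot ζ 12 ∧ g ∈ G8 ∧
    -- `q₁, q₂` are eigenvectors of `g` with eigenvalues `ζ, ζ^5`
    g.mulVec q₁ = ζ • q₁ ∧ g.mulVec q₂ = ζ ^ 5 • q₂ ∧
    -- `q₁` is a regular vector of `G₈`, so `(g, ζ, q₁)` is an admissible triplet
    (∀ M ∈ G8, IsReflection M → M.mulVec q₁ ≠ q₁) ∧
    -- `x` is a set of basic invariants with degrees `12, 8`, good and compatible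
    IsBasicInvariantsMat (G8 : Set (Matrix (Fin 2) (Fin 2) ℂ)) ![12, 8] x ∧
    IsGood ![12, 8] ![q₁, q₂] q₁ x ∧
    IsCompatible ![q₁, q₂] q₁ x := by
  have hx : x = G₈.basicInv := by
    subst htO hhO
    exact funext (Fin.forall_fin_two.mpr ⟨hx1, hx2⟩)
  subst hζ hr₄ hr₄' hG8 hg hq₁ hq₂ hx
  exact ⟨G₈.isPrimitiveRoot_ζ, G₈.r₄_mul_r₄'_mem, G₈.mulVec_q₁, G₈.mulVec_q₂,
    fun _ => G₈.q₁_regular, G₈.isBasicInvariantsMat_basicInv, G₈.isGood_basicInv,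
    G₈.isCompatible_basicInv⟩

end

end Paper
end
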